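/- arXiv:math/0003123 — 2 statements merged into one kernel-verified Lean document; each statement's English description precedes it below -/
import Mathlib

section
/- Let p be a parabolic subalgebra of a finite-dimensional complex semisimple Lie algebra g, with nilpotent radical n. (i) Every Cartan subalgebra j of p is a Cartan subalgebra of g, and there exists a unique Langlands decomposition p = l ⊕ n such that j ⊆ l. (ii) Any two Cartan subalgebras j, j' of g contained in p are conjugate by an element of the analytic subgroup P with Lie algebra p, and this element conjugates the corresponding subalgebras l and l'. (iii) For any Langlands decomposition p = l ⊕ n, every Cartan subalgebra of l is a Cartan subalgebra of g. -/
open Module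

namespace ManinPaper

variable (g : Type*) [LieRing g] [LieAlgebra ℝ g] [LieAlgebra ℂ g] [IsScalarTower ℝ ℂ g]
  [FiniteDimensional ℂ g] [FiniteDimensional ℝ g]

/-! ### Subalgebras of `g`, given as subspaces -/

def IsSub (V : Submodule ℂ g) : Prop := ∀ x ∈ V, ∀ y ∈ V, ⁅x, y⁆ ∈ V

def IsSubR (V : Submodule ℝ g) : Prop := ∀ x ∈ V, ∀ y ∈ V, ⁅x, y⁆ ∈ V

/-- The span of all brackets. -/
def bracketSpan (V W : Submodule ℂ g) : Submodule ℂ g :=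
  Submodule.span ℂ {z : g | ∃ x ∈ V, ∃ y ∈ W, ⁅x, y⁆ = z}

def bracketSpanR (V W : Submodule ℝ g) : Submodule ℝ g :=
  Submodule.span ℝ {z : g | ∃ x ∈ V, ∃ y ∈ W, ⁅x, y⁆ = z}

/-- Derived series of a subalgebra (given as a subspace). -/
def derivedSub (V : Submodule ℂ g) : ℕ → Submodule ℂ g
  | 0 => V
  | k + 1 => bracketSpan g (derivedSub V k) (derivedSub V k)

def derivedSubR (V : Submodule ℝ g) : ℕ → Submodule ℝ g
  | 0 => V
  | k + 1 => bracketSpanR g (derivedSubR V k) (derivedSubR V k)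

/-- Lower central series. -/
def lcsSub (V : Submodule ℂ g) : ℕ → Submodule ℂ g
  | 0 => V
  | k + 1 => bracketSpan g V (lcsSub V k)

def lcsSubR (V : Submodule ℝ g) : ℕ → Submodule ℝ g
  | 0 => V
  | k + 1 => bracketSpanR g V (lcsSubR V k)

def SolvableSub (V : Submodule ℂ g) : Prop := ∃ k, derivedSub g V k = ⊥

def SolvableSubR (V : Submodule ℝ g) : Prop := ∃ k, derivedSubR g V k = ⊥

def NilpotentSub (V : Submodule ℂ g) : Prop := ∃ k, lcsSub g V k = ⊥

def NilpotentSubR (V : Submodule ℝ g) : Prop := ∃ k, lcsSubR g V k = ⊥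

/-- `J` is an ideal of the subalgebra `V`. -/
def IsIdealIn (V J : Submodule ℂ g) : Prop :=
  J ≤ V ∧ ∀ x ∈ V, ∀ y ∈ J, ⁅x, y⁆ ∈ J

def IsIdealInR (V J : Submodule ℝ g) : Prop :=
  J ≤ V ∧ ∀ x ∈ V, ∀ y ∈ J, ⁅x, y⁆ ∈ J

/-- The radical (largest solvable ideal) of the subalgebra `V`. -/
def radicalIn (V : Submodule ℂ g) : Submodule ℂ g :=
  sSup {J : Submodule ℂ g | IsIdealIn g V J ∧ SolvableSub g J}

def radicalInR (V : Submodule ℝ g) : Submodule ℝ g :=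
  sSup {J : Submodule ℝ g | IsIdealInR g V J ∧ SolvableSubR g J}

/-- The nilpotent radical `[V,V] ⊓ rad V` of the subalgebra `V`; by Bourbaki, Ch. I §5.3,
this is the largest ideal of `V` whose elements act nilpotently in every finite-dimensional
representation of `V`. -/
def nilpotentRadIn (V : Submodule ℂ g) : Submodule ℂ g :=
  bracketSpan g V V ⊓ radicalIn g V

def nilpotentRadInR (V : Submodule ℝ g) : Submodule ℝ g :=
  bracketSpanR g V V ⊓ radicalInR g V

/-- The centre of the subalgebra `V`. -/
def centerIn (V : Submodule ℂ g) : Submodule ℂ g where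
  carrier := {z : g | z ∈ V ∧ ∀ y ∈ V, ⁅z, y⁆ = 0}
  zero_mem' := ⟨V.zero_mem, fun y _ => zero_lie y⟩
  add_mem' := by
    rintro a b ⟨ha, ha'⟩ ⟨hb, hb'⟩
    exact ⟨V.add_mem ha hb, fun y hy => by rw [add_lie, ha' y hy, hb' y hy, add_zero]⟩
  smul_mem' := by
    rintro c x ⟨hx, hx'⟩
    exact ⟨V.smul_mem c hx, fun y hy => by rw [smul_lie, hx' y hy, smul_zero]⟩

/-- The centralizer of a set. -/
def centralizerOf (s : Set g) : Submodule ℂ g where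
  carrier := {z : g | ∀ y ∈ s, ⁅z, y⁆ = 0}
  zero_mem' := fun y _ => zero_lie y
  add_mem' := by
    rintro a b ha hb
    exact fun y hy => by rw [add_lie, ha y hy, hb y hy, add_zero]
  smul_mem' := by
    rintro c x hx
    exact fun y hy => by rw [smul_lie, hx y hy, smul_zero]

/-- The derived (sub)algebra of `V`, as a subspace of `g`. -/
def derivedOf (V : Submodule ℂ g) : Submodule ℂ g := bracketSpan g V V

/-- A semisimple complex subalgebra: a subalgebra with trivial radical. -/
def SemisimpleSub (V : Submodule ℂ g) : Prop := IsSub g V ∧ radicalIn g V = ⊥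

/-- Borel subalgebras of the subalgebra `W`: maximal solvable subalgebras of `W`. -/
def IsBorelIn (W b : Submodule ℂ g) : Prop :=
  IsSub g b ∧ b ≤ W ∧ SolvableSub g b ∧
    ∀ b' : Submodule ℂ g, IsSub g b' → b' ≤ W → SolvableSub g b' → b ≤ b' → b' = b

/-- Parabolic subalgebras of `W`: subalgebras of `W` containing a Borel subalgebra of `W`. -/
def IsParabolicIn (W p : Submodule ℂ g) : Prop :=
  IsSub g p ∧ p ≤ W ∧ ∃ b : Submodule ℂ g, IsBorelIn g W b ∧ b ≤ p

/-- `l` is reductive in `W`: every `l`-invariant subspace of `W` admits an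
`l`-invariant complement in `W`. -/
def ReductiveIn (W l : Submodule ℂ g) : Prop :=
  ∀ U : Submodule ℂ g, U ≤ W → (∀ x ∈ l, ∀ u ∈ U, ⁅x, u⁆ ∈ U) →
    ∃ U' : Submodule ℂ g, U' ≤ W ∧ (∀ x ∈ l, ∀ u ∈ U', ⁅x, u⁆ ∈ U') ∧
      U ⊓ U' = ⊥ ∧ U ⊔ U' = W

/-- A Langlands decomposition `p = l ⊕ n` of the parabolic subalgebra `p` of `W`, where
`n` is the nilpotent radical of `p` and `l` is a subalgebra reductive in `W`. -/
def IsLanglandsIn (W p l : Submodule ℂ g) : Prop :=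
  IsSub g l ∧ l ≤ p ∧ ReductiveIn g W l ∧
    l ⊓ nilpotentRadIn g p = ⊥ ∧ l ⊔ nilpotentRadIn g p = p

/-- Cartan subalgebras of `W`: nilpotent and self-normalizing in `W`. -/
def IsCartanIn (W j : Submodule ℂ g) : Prop :=
  IsSub g j ∧ j ≤ W ∧ NilpotentSub g j ∧
    ∀ x ∈ W, (∀ y ∈ j, ⁅x, y⁆ ∈ j) → x ∈ j

def IsCartanInR (W j : Submodule ℝ g) : Prop :=
  IsSubR g j ∧ j ≤ W ∧ NilpotentSubR g j ∧
    ∀ x ∈ W, (∀ y ∈ j, ⁅x, y⁆ ∈ j) → x ∈ j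

/-- `g` is reductive: its radical coincides with its centre. -/
def IsReductive : Prop := radicalIn g ⊤ = centerIn g ⊤

/-- `b'` is the Borel subalgebra of `W` opposite to `b` relative to the Cartan
subalgebra `j`. -/
def IsOppositeBorelIn (W j b b' : Submodule ℂ g) : Prop :=
  IsBorelIn g W b' ∧ j ≤ b' ∧ b ⊓ b' = j

/-! ### Inner automorphisms -/

/-- Truncated exponential of an endomorphism; for a nilpotent endomorphism of `g` it
equals the exponential. -/
noncomputable def expEnd (f : Module.End ℂ g) : Module.End ℂ g :=
  ∑ i ∈ Finset.range (finrank ℂ g + 1), ((i.factorial : ℂ)⁻¹) • f ^ i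

/-- The group of inner automorphisms of the reductive complex Lie algebra `g`: the subgroup
of linear automorphisms generated by the exponentials of nilpotent inner derivations.  This
coincides with the image of the connected simply connected group `G` with Lie algebra `g`
under the adjoint action. -/
noncomputable def innerAut : Subgroup (g ≃ₗ[ℂ] g) :=
  Subgroup.closure {e : g ≃ₗ[ℂ] g | ∃ x : g,
    IsNilpotent (LieAlgebra.ad ℂ g x) ∧ (e : g →ₗ[ℂ] g) = expEnd g (LieAlgebra.ad ℂ g x)}

end ManinPaper

namespace CPar
open Module LieAlgebra LieModule
set_option linter.unusedSectionVars false

/-- Consequence of Lie's theorem. -/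
theorem lie_aux {L : Type*} [LieRing L] [LieAlgebra ℂ L] [IsSolvable L] (d : ℕ) :
    ∀ (M : Type*) [AddCommGroup M] [Module ℂ M] [LieRingModule L M] [LieModule ℂ L M]
      [FiniteDimensional ℂ M], finrank ℂ M ≤ d →
      (∀ x y : L, IsNilpotent (toEnd ℂ L M x) → IsNilpotent (toEnd ℂ L M x * toEnd ℂ L M y)) ∧
      (∀ x y : L, IsNilpotent (toEnd ℂ L M ⁅x, y⁆)) ∧
      (∀ x y : L, IsNilpotent (toEnd ℂ L M x) → IsNilpotent (toEnd ℂ L M y) →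
        IsNilpotent (toEnd ℂ L M (x + y))) := by
  induction d with
  | zero =>
    intro M _ _ _ _ _ h
    have : Subsingleton M := (finrank_zero_iff (R := ℂ)).mp (by omega)
    exact ⟨fun x y _ => ⟨1, Subsingleton.elim _ _⟩, fun x y => ⟨1, Subsingleton.elim _ _⟩,
      fun x y _ _ => ⟨1, Subsingleton.elim _ _⟩⟩
  | succ d ih =>
    intro M _ _ _ _ _ h
    rcases subsingleton_or_nontrivial M with hM | hM
    · exact ⟨fun x y _ => ⟨1, Subsingleton.elim _ _⟩, fun x y => ⟨1, Subsingleton.elim _ _⟩,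
      fun x y _ _ => ⟨1, Subsingleton.elim _ _⟩⟩
    obtain ⟨χ, hχ⟩ := exists_nontrivial_weightSpace_of_isSolvable ℂ L M
    obtain ⟨⟨v, hv⟩, hv0⟩ := exists_ne (0 : weightSpace M χ)
    have hv0' : v ≠ 0 := by simpa using hv0
    rw [mem_weightSpace] at hv
    let W : LieSubmodule ℂ L M :=
      { Submodule.span ℂ {v} with
        lie_mem := by
          intro x m hm
          obtain ⟨c, rfl⟩ := Submodule.mem_span_singleton.mp hm
          rw [lie_smul, hv x]
          exact Submodule.smul_mem _ _ (Submodule.smul_mem _ _ (Submodule.mem_span_singleton_self v)) }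
    have hWmem : ∀ m, m ∈ W ↔ ∃ c : ℂ, c • v = m := fun m => Submodule.mem_span_singleton
    have hW : ∀ (x : L) (m : M), m ∈ W → ⁅x, m⁆ = χ x • m := by
      intro x m hm
      obtain ⟨c, rfl⟩ := (hWmem m).mp hm
      rw [lie_smul, hv x, smul_comm]
    have hdim : finrank ℂ (M ⧸ W) ≤ d := by
      have h1 := Submodule.finrank_quotient_add_finrank W.toSubmodule
      have h2 : finrank ℂ W.toSubmodule = 1 := finrank_span_singleton hv0'
      have h3 : finrank ℂ (M ⧸ W) = finrank ℂ (M ⧸ W.toSubmodule) := rfl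
      omega
    obtain ⟨ih1, ih2, ih3⟩ := ih (M ⧸ W) hdim
    -- key: lifting nilpotency
    have key : ∀ (f : Module.End ℂ M) (f' : Module.End ℂ (M ⧸ W)),
        (∀ m, f' (LieSubmodule.Quotient.mk' W m) = LieSubmodule.Quotient.mk' W (f m)) →
        IsNilpotent f' → (∀ m ∈ W, f m = 0) → IsNilpotent f := by
      rintro f f' hff' ⟨k, hk⟩ h0
      have : ∀ k m, (f' ^ k) (LieSubmodule.Quotient.mk' W m) =
          LieSubmodule.Quotient.mk' W ((f ^ k) m) := by
        intro k
        induction k with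
        | zero => intro m; simp
        | succ k ih => intro m; rw [pow_succ, pow_succ, Module.End.mul_apply, Module.End.mul_apply, hff', ih]
      refine ⟨k + 1, LinearMap.ext fun m => ?_⟩
      rw [pow_succ', Module.End.mul_apply]
      apply h0
      rw [← LieSubmodule.Quotient.mk_eq_zero]
      have := this k m
      rw [hk] at this
      exact this.symm
    have hχn : ∀ x, IsNilpotent (toEnd ℂ L M x) → χ x = 0 := by
      rintro x ⟨k, hk⟩
      have : ∀ k, ((toEnd ℂ L M x) ^ k) v = (χ x) ^ k • v := by
        intro k
        induction k with
        | zero => simp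
        | succ k ih => rw [pow_succ, Module.End.mul_apply, toEnd_apply_apply, hv, map_smul, ih, smul_smul, pow_succ']
      have h2 := this k
      rw [hk, LinearMap.zero_apply] at h2
      exact eq_zero_of_pow_eq_zero ((smul_eq_zero.mp h2.symm).resolve_right hv0')
    have quo : ∀ x, IsNilpotent (toEnd ℂ L M x) → IsNilpotent (toEnd ℂ L (M ⧸ W) x) := by
        intro x hx
        obtain ⟨k, hk⟩ := hx
        refine ⟨k, LinearMap.ext fun m => ?_⟩
        obtain ⟨m, rfl⟩ := LieSubmodule.Quotient.surjective_mk' W m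
        have : ∀ k m, ((toEnd ℂ L (M ⧸ W) x) ^ k) (LieSubmodule.Quotient.mk' W m) =
            LieSubmodule.Quotient.mk' W (((toEnd ℂ L M x) ^ k) m) := by
          intro k
          induction k with
          | zero => intro m; simp
          | succ k ih => intro m; rw [pow_succ, pow_succ, Module.End.mul_apply, Module.End.mul_apply, ← ih]; rfl
        rw [this, hk]; simp
    refine ⟨?_, ?_, ?_⟩
    · intro x y hx
      refine key _ (toEnd ℂ L (M ⧸ W) x * toEnd ℂ L (M ⧸ W) y) (fun m => rfl)
        (ih1 x y (quo x hx)) ?_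
      · intro m hm
        rw [Module.End.mul_apply, toEnd_apply_apply, toEnd_apply_apply, hW y m hm, lie_smul,
          hW x m hm, hχn x hx]
        simp
    · intro x y
      refine key _ (toEnd ℂ L (M ⧸ W) ⁅x, y⁆) (fun m => rfl) (ih2 x y) ?_
      intro m hm
      rw [toEnd_apply_apply, lie_lie, hW y m hm, hW x m hm, lie_smul, lie_smul, hW y m hm, hW x m hm,
        smul_comm, sub_self]
    · intro x y hx hy
      refine key _ (toEnd ℂ L (M ⧸ W) (x + y)) (fun m => rfl) (ih3 x y (quo x hx) (quo y hy)) ?_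
      intro m hm
      rw [toEnd_apply_apply, add_lie, hW y m hm, hW x m hm, hχn x hx, hχn y hy]
      simp

variable {g : Type*} [LieRing g] [LieAlgebra ℂ g] [FiniteDimensional ℂ g]

theorem killing_zero_of_nilp (s : LieSubalgebra ℂ g) [IsSolvable s] {x y : g} (hx : x ∈ s)
    (hy : y ∈ s) (hn : IsNilpotent (ad ℂ g x)) : killingForm ℂ g x y = 0 := by
  have h := (lie_aux (L := s) (finrank ℂ g) g le_rfl).1 ⟨x, hx⟩ ⟨y, hy⟩ hn
  have h2 := LinearMap.isNilpotent_trace_of_isNilpotent h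
  exact h2.eq_zero

theorem nilp_of_lie (s : LieSubalgebra ℂ g) [IsSolvable s] {x y : g} (hx : x ∈ s)
    (hy : y ∈ s) : IsNilpotent (ad ℂ g ⁅x, y⁆) :=
  (lie_aux (L := s) (finrank ℂ g) g le_rfl).2.1 ⟨x, hx⟩ ⟨y, hy⟩

theorem solvable_of_killing (s : LieSubalgebra ℂ g)
    (h : ∀ x ∈ s, ∀ y ∈ s, ∀ z ∈ s, killingForm ℂ g x ⁅y, z⁆ = 0) : IsSolvable s := by
  set D : LieIdeal ℂ s := derivedSeries ℂ s 1
  have hD : D = ⁅(⊤ : LieIdeal ℂ s), (⊤ : LieIdeal ℂ s)⁆ := rfl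
  have hk : ∀ x ∈ s, ∀ y : s, y ∈ D → killingForm ℂ g x y = 0 := by
    intro x hx y hy
    rw [hD, ← LieSubmodule.mem_toSubmodule, LieSubmodule.lieIdeal_oper_eq_linear_span'] at hy
    induction hy using Submodule.span_induction with
    | mem y hy =>
      obtain ⟨a, -, b, -, rfl⟩ := hy
      exact h x hx a a.2 b b.2
    | zero => simp
    | add a b _ _ ha hb =>
      change killingForm ℂ g x ((a : g) + (b : g)) = 0
      rw [map_add, ha, hb, add_zero]
    | smul c a _ ha =>
      change killingForm ℂ g x (c • (a : g)) = 0
      rw [map_smul, ha, smul_zero]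
  have htf : traceForm ℂ D g = 0 := by
    ext ⟨x, hx⟩ ⟨y, hy⟩
    exact hk x x.2 y hy
  have hnil : LieModule.IsNilpotent (derivedSeries ℂ D 1) g :=
    LieModule.isNilpotent_derivedSeries_of_traceForm_eq_zero htf
  have ring_nilp : LieRing.IsNilpotent (derivedSeries ℂ D 1) := by
    rw [LieAlgebra.isNilpotent_iff_forall (R := ℂ)]
    rintro ⟨⟨⟨x, hxs⟩, hx⟩, hxD⟩
    obtain ⟨k, hk⟩ := (LieModule.isNilpotent_iff_forall' (R := ℂ)).mp hnil ⟨⟨⟨x, hxs⟩, hx⟩, hxD⟩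
    refine ⟨k, LinearMap.ext fun z => ?_⟩
    have : ∀ k, (((((ad ℂ (derivedSeries ℂ D 1) ⟨⟨⟨x, hxs⟩, hx⟩, hxD⟩) ^ k) z : D) : s) : g) =
        ((toEnd ℂ (derivedSeries ℂ D 1) g ⟨⟨⟨x, hxs⟩, hx⟩, hxD⟩) ^ k) (((z : D) : s) : g) := by
      intro k
      induction k with
      | zero => rfl
      | succ k ih => rw [pow_succ', pow_succ', Module.End.mul_apply, Module.End.mul_apply, ← ih]; rfl
    have h1 := this k
    rw [hk] at h1
    exact Subtype.ext (Subtype.ext (Subtype.ext h1))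
  have s1 : IsSolvable (derivedSeries ℂ D 1) := inferInstance
  have e1 : IsSolvable D := by
    obtain ⟨k, hk⟩ := IsSolvable.solvable ℂ (derivedSeries ℂ D 1)
    rw [LieIdeal.derivedSeries_eq_bot_iff] at hk
    refine IsSolvable.mk (R := ℂ) (k := k + 1) ?_
    rw [derivedSeries_def, derivedSeriesOfIdeal_add]
    exact hk
  obtain ⟨k, hk⟩ := IsSolvable.solvable ℂ D
  rw [LieIdeal.derivedSeries_eq_bot_iff] at hk
  refine IsSolvable.mk (R := ℂ) (k := k + 1) ?_
  rw [derivedSeries_def, derivedSeriesOfIdeal_add]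
  exact hk

/-- Adjoining a normalizing element. -/
def adjoinElt (s : LieSubalgebra ℂ g) (y : g) (hy : ∀ x ∈ s, ⁅y, x⁆ ∈ s) : LieSubalgebra ℂ g where
  toSubmodule := s.toSubmodule ⊔ Submodule.span ℂ {y}
  lie_mem' := by
    intro a b ha hb
    obtain ⟨a1, ha1, a2, ha2, rfl⟩ := Submodule.mem_sup.mp ha
    obtain ⟨b1, hb1, b2, hb2, rfl⟩ := Submodule.mem_sup.mp hb
    obtain ⟨c, rfl⟩ := Submodule.mem_span_singleton.mp ha2
    obtain ⟨d, rfl⟩ := Submodule.mem_span_singleton.mp hb2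
    apply Submodule.mem_sup_left
    have h1 : ⁅a1, y⁆ ∈ s := by rw [← lie_skew]; exact s.neg_mem (hy a1 ha1)
    simp only [add_lie, lie_add, smul_lie, lie_smul, lie_self, smul_zero, add_zero]
    exact s.add_mem (s.add_mem (s.lie_mem ha1 hb1) (s.smul_mem _ (hy _ hb1))) (s.smul_mem _ h1)

theorem mem_adjoinElt_self (s : LieSubalgebra ℂ g) (y : g) (hy) : y ∈ adjoinElt s y hy :=
  Submodule.mem_sup_right (Submodule.mem_span_singleton_self y)

theorem le_adjoinElt (s : LieSubalgebra ℂ g) (y : g) (hy) : s ≤ adjoinElt s y hy :=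
  fun _ hx => Submodule.mem_sup_left hx

theorem lie_mem_adjoinElt (s : LieSubalgebra ℂ g) (y : g) (hy) {a b : g}
    (ha : a ∈ adjoinElt s y hy) (hb : b ∈ adjoinElt s y hy) : ⁅a, b⁆ ∈ s := by
  obtain ⟨a1, ha1, a2, ha2, rfl⟩ := Submodule.mem_sup.mp ha
  obtain ⟨b1, hb1, b2, hb2, rfl⟩ := Submodule.mem_sup.mp hb
  obtain ⟨c, rfl⟩ := Submodule.mem_span_singleton.mp ha2
  obtain ⟨d, rfl⟩ := Submodule.mem_span_singleton.mp hb2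
  have h1 : ⁅a1, y⁆ ∈ s := by rw [← lie_skew]; exact s.neg_mem (hy a1 ha1)
  simp only [add_lie, lie_add, smul_lie, lie_smul, lie_self, smul_zero, add_zero]
  exact s.add_mem (s.add_mem (s.lie_mem ha1 hb1) (s.smul_mem _ (hy _ hb1))) (s.smul_mem _ h1)

theorem solvable_of_lie_mem (s t : LieSubalgebra ℂ g) [IsSolvable s]
    (h : ∀ a ∈ t, ∀ b ∈ t, ⁅a, b⁆ ∈ s) : IsSolvable t := by
  set D : LieIdeal ℂ t := derivedSeries ℂ t 1
  have hD : D = ⁅(⊤ : LieIdeal ℂ t), (⊤ : LieIdeal ℂ t)⁆ := rfl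
  have hk : ∀ y : t, y ∈ D → (y : g) ∈ s := by
    intro y hy
    rw [hD, ← LieSubmodule.mem_toSubmodule, LieSubmodule.lieIdeal_oper_eq_linear_span'] at hy
    induction hy using Submodule.span_induction with
    | mem y hy =>
      obtain ⟨a, -, b, -, rfl⟩ := hy
      exact h a a.2 b b.2
    | zero => simp
    | add a b _ _ ha hb => exact s.add_mem ha hb
    | smul c a _ ha => exact s.smul_mem c ha
  let φ : D →ₗ⁅ℂ⁆ s :=
    { toFun := fun y => ⟨y.1.1, hk y.1 y.2⟩
      map_add' := fun _ _ => rfl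
      map_smul' := fun _ _ => rfl
      map_lie' := rfl }
  have hφ : Function.Injective φ := by
    intro a b hab
    have : ((a : t) : g) = ((b : t) : g) := congrArg (fun z : s => (z : g)) hab
    exact Subtype.ext (Subtype.ext this)
  have e1 : IsSolvable D := hφ.lieAlgebra_isSolvable
  obtain ⟨k, hk⟩ := IsSolvable.solvable ℂ D
  rw [LieIdeal.derivedSeries_eq_bot_iff] at hk
  refine IsSolvable.mk (R := ℂ) (k := k + 1) ?_
  rw [derivedSeries_def, derivedSeriesOfIdeal_add]
  exact hk

theorem adjoinElt_solvable (s : LieSubalgebra ℂ g) (y : g) (hy) [IsSolvable s] :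
    IsSolvable (adjoinElt s y hy) :=
  solvable_of_lie_mem s _ fun _ ha _ hb => lie_mem_adjoinElt s y hy ha hb

theorem solvable_mono {s t : LieSubalgebra ℂ g} (h : s ≤ t) [IsSolvable t] : IsSolvable s :=
  solvable_of_lie_mem t s fun _ ha _ hb => t.lie_mem (h ha) (h hb)

end CPar

namespace CPar
open Module LieAlgebra LieModule
set_option linter.unusedSectionVars false

open Module.End in
theorem exists_conj (V : Type*) [AddCommGroup V] [Module ℂ V] [FiniteDimensional ℂ V]
    (f : Module.End ℂ V) : ∃ (D : Module.End ℂ V) (R : Polynomial ℂ), D = Polynomial.aeval f R ∧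
      (∀ μ : ℂ, ∀ u ∈ f.maxGenEigenspace μ, D u = (starRingEnd ℂ μ) • u) ∧
      (LinearMap.trace ℂ V (f * D) = 0 → IsNilpotent f) := by
  classical
  obtain ⟨n, hn_adj, s, hns, hn_nil, hs_ss, hX⟩ := f.exists_isNilpotent_isSemisimple
  obtain ⟨P, hP⟩ : ∃ P : Polynomial ℂ, Polynomial.aeval f P = s := by
    rw [Algebra.adjoin_singleton_eq_range_aeval] at hns
    exact hns
  have hns' : Commute n s :=
    Algebra.commute_of_mem_adjoin_singleton_of_commute hns (Algebra.commute_of_mem_adjoin_self hn_adj).symm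
  have : Finite s.Eigenvalues := inferInstance
  obtain ⟨q, hq⟩ : ∃ q : Polynomial ℂ, ∀ i : s.Eigenvalues, q.eval (i : ℂ) = starRingEnd ℂ (i : ℂ) :=
    (Polynomial.exists_eval_eq_iff (fun i : s.Eigenvalues => (i : ℂ)) (fun i => starRingEnd ℂ (i : ℂ))).mpr
      (by intro i j h; simp only [h])
  have hD : ∀ μ : ℂ, ∀ u ∈ s.eigenspace μ, (Polynomial.aeval s q) u = (starRingEnd ℂ μ) • u := by
    intro μ u hu
    by_cases hu0 : u = 0
    · simp [hu0]
    rw [Module.End.aeval_apply_of_mem_apply_eq_smul (mem_eigenspace_iff.mp hu)]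
    have hev : s.HasEigenvalue μ := hasEigenvalue_of_hasEigenvector ⟨hu, hu0⟩
    have h1 : q.eval μ = starRingEnd ℂ μ := hq ⟨μ, hev⟩
    rw [h1]
  have hss : s.IsFinitelySemisimple := hs_ss.isFinitelySemisimple
  have hge : ∀ μ : ℂ, ∀ u ∈ f.maxGenEigenspace μ, u ∈ s.eigenspace μ := by
    intro μ u hu
    rw [← hss.maxGenEigenspace_eq_eigenspace]
    have hc : Commute f (-n) := by
      rw [hX]; exact ((Commute.refl n).add_left hns'.symm).neg_right
    have h1 := genEigenspace_inf_le_add f (-n) μ 0 ⊤ ⊤ hc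
    have h2 : u ∈ (-n).genEigenspace 0 ⊤ := by
      obtain ⟨k, hk⟩ := hn_nil.neg
      change u ∈ (-n).maxGenEigenspace 0
      rw [mem_maxGenEigenspace]
      exact ⟨k, by simp [hk]⟩
    have h3 := h1 ⟨hu, h2⟩
    have h4 : f + -n = s := by rw [hX]; abel
    rw [h4, add_zero] at h3
    simpa using h3
  refine ⟨Polynomial.aeval s q, q.comp P, by rw [Polynomial.aeval_comp, hP],
    fun μ u hu => hD μ u (hge μ u hu), ?_⟩
  intro htr
  let eigenDecomp := DirectSum.isInternal_submodule_of_iSupIndep_of_iSup_eq_top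
    s.eigenspaces_iSupIndep hs_ss.iSup_eigenspace_eq_top
  let I := (ν : ℂ) × Fin (finrank ℂ (s.eigenspace ν))
  let v : Basis I ℂ V := eigenDecomp.collectedBasis fun μ ↦ finBasis ℂ (s.eigenspace μ)
  have : Fintype I := FiniteDimensional.fintypeBasisIndex v
  let μ : I → ℂ := Sigma.fst
  have hmem (i : I) : v i ∈ s.eigenspace (μ i) := eigenDecomp.collectedBasis_mem _ i
  have hsv (i : I) : s (v i) = μ i • v i := mem_eigenspace_iff.mp (hmem i)
  set y := Polynomial.aeval s q
  have hcs : Commute n y := by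
    have hmy : y ∈ Algebra.adjoin ℂ {s} := by
      rw [Algebra.adjoin_singleton_eq_range_aeval]
      exact ⟨q, rfl⟩
    exact Algebra.commute_of_mem_adjoin_singleton_of_commute hmy hns'
  have htr_n : LinearMap.trace ℂ V (n * y) = 0 :=
    (LinearMap.isNilpotent_trace_of_isNilpotent (hcs.isNilpotent_mul_right hn_nil)).eq_zero
  have htr_s : LinearMap.trace ℂ V (s * y) = ∑ i, starRingEnd ℂ (μ i) * μ i := by
    rw [LinearMap.trace_eq_matrix_trace _ v, Matrix.trace]
    refine Finset.sum_congr rfl fun i _ => ?_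
    simp [LinearMap.toMatrix_apply, hD _ _ (hmem i), hsv]
  rw [hX, add_mul, map_add, htr_n, htr_s, zero_add] at htr
  have hz : ∀ i, μ i = 0 := by
    have h1 : ∑ i, Complex.normSq (μ i) = 0 := by
      have : ((∑ i, Complex.normSq (μ i) : ℝ) : ℂ) = 0 := by
        rw [← htr]; push_cast
        exact Finset.sum_congr rfl fun i _ => Complex.normSq_eq_conj_mul_self
      exact_mod_cast this
    intro i
    have := (Finset.sum_eq_zero_iff_of_nonneg (fun i _ => Complex.normSq_nonneg _)).mp h1 i (Finset.mem_univ _)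
    exact Complex.normSq_eq_zero.mp this
  have hs0 : s = 0 := v.ext fun i => by rw [hsv, hz]; simp
  rw [hX, hs0, add_zero]; exact hn_nil

variable {g : Type*} [LieRing g] [LieAlgebra ℂ g] [FiniteDimensional ℂ g] [IsKilling ℂ g]

theorem lemmaN (x : g) : ∃ y : g,
    (∀ U W : Submodule ℂ g, U ≤ W → (∀ w ∈ W, ⁅x, w⁆ ∈ U) → ∀ w ∈ W, ⁅y, w⁆ ∈ U) ∧
    (killingForm ℂ g x y = 0 → IsNilpotent (ad ℂ g x)) := by
  by_cases hx0 : x = 0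
  · exact ⟨0, fun U W _ _ w _ => by simp, fun _ => ⟨1, by simp [hx0]⟩⟩
  obtain ⟨D, R, hDR, hD, hnil⟩ := exists_conj g (ad ℂ g x)
  have hder : ∀ a b : g, D ⁅a, b⁆ = ⁅a, D b⁆ - ⁅b, D a⁆ := by
    intro a b
    have htop := Module.End.iSup_maxGenEigenspace_eq_top (ad ℂ g x)
    have ha : a ∈ ⨆ μ, (ad ℂ g x).maxGenEigenspace μ := htop ▸ Submodule.mem_top
    have hb : b ∈ ⨆ μ, (ad ℂ g x).maxGenEigenspace μ := htop ▸ Submodule.mem_top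
    induction ha using Submodule.iSup_induction' with
    | mem μ a ha =>
      induction hb using Submodule.iSup_induction' with
      | mem ν b hb =>
        have := lie_mem_maxGenEigenspace_toEnd (R := ℂ) (L := g) (M := g) ha hb
        rw [hD _ _ this, hD _ _ ha, hD _ _ hb, lie_smul, lie_smul, ← lie_skew b a]
        simp only [map_add, add_smul, smul_neg]
        abel
      | zero => simp
      | add b c _ _ hb hc => rw [lie_add, map_add, map_add, lie_add, add_lie, hb, hc]; abel
    | zero => simp
    | add b c _ _ hb hc => rw [add_lie, map_add, map_add, lie_add, add_lie, hb, hc]; abel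
  obtain ⟨y, hy⟩ := LieDerivation.IsKilling.exists_eq_ad
    (⟨D, hder⟩ : LieDerivation ℂ g g)
  have hyD : ∀ w, ⁅y, w⁆ = D w := fun w => by
    have := congrArg (fun d : LieDerivation ℂ g g => d w) hy
    simpa using this
  have hyad : ad ℂ g y = D := LinearMap.ext hyD
  refine ⟨y, ?_, ?_⟩
  · intro U W hUW hW w hw
    rw [hyD]
    have hR0 : R.coeff 0 = 0 := by
      have h1 : D x = (starRingEnd ℂ 0) • x :=
        hD 0 x (by rw [Module.End.mem_maxGenEigenspace]; exact ⟨1, by simp⟩)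
      have h2 : D x = R.eval 0 • x := by
        rw [hDR]; exact Module.End.aeval_apply_of_mem_apply_eq_smul (by simp)
      rw [h1, map_zero, zero_smul] at h2
      rw [Polynomial.coeff_zero_eq_eval_zero]
      exact (smul_eq_zero.mp h2.symm).resolve_right hx0
    obtain ⟨R', hR'⟩ := Polynomial.X_dvd_iff.mpr hR0
    have hpow : ∀ (Q : Polynomial ℂ), ∀ w ∈ W, Polynomial.aeval (ad ℂ g x) Q w ∈ W := by
      intro Q w hw
      exact Q.aeval_apply_smul_mem_of_le_comap hw _ (fun z hz => hUW (hW z hz))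
    rw [hDR, hR', map_mul, Polynomial.aeval_X, Module.End.mul_apply]
    exact hW _ (hpow R' w hw)
  · intro h
    apply hnil
    rw [← hyad]; exact h

end CPar

namespace CPar
open Module LieAlgebra LieModule
set_option linter.unusedSectionVars false
variable {g : Type*} [LieRing g] [LieAlgebra ℂ g] [FiniteDimensional ℂ g]

/-- The orthogonal for the Killing form. -/
noncomputable def perp (V : Submodule ℂ g) : Submodule ℂ g :=
  LinearMap.BilinForm.orthogonal (killingForm ℂ g) V

theorem kill_symm (x y : g) : killingForm ℂ g x y = killingForm ℂ g y x :=
  LieModule.traceForm_comm ℂ g g x y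

theorem kill_inv (x y z : g) : killingForm ℂ g ⁅x, y⁆ z = killingForm ℂ g x ⁅y, z⁆ :=
  LieModule.traceForm_apply_lie_apply ℂ g g x y z

theorem mem_perp {V : Submodule ℂ g} {x : g} : x ∈ perp V ↔ ∀ v ∈ V, killingForm ℂ g x v = 0 := by
  unfold perp
  rw [LinearMap.BilinForm.mem_orthogonal_iff]
  constructor
  · intro h v hv
    rw [kill_symm]; exact h v hv
  · intro h v hv
    change killingForm ℂ g v x = 0
    rw [kill_symm]; exact h v hv

theorem perp_anti {V W : Submodule ℂ g} (h : V ≤ W) : perp W ≤ perp V :=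
  fun _ hx => mem_perp.mpr fun v hv => mem_perp.mp hx v (h hv)

/-- Maximal solvable subalgebras. -/
def MaxSolv (b : LieSubalgebra ℂ g) : Prop :=
  IsSolvable b ∧ ∀ b' : LieSubalgebra ℂ g, IsSolvable b' → b ≤ b' → b' ≤ b

theorem MaxSolv.mem_of_norm {b : LieSubalgebra ℂ g} (hb : MaxSolv b) {y : g}
    (hy : ∀ x ∈ b, ⁅y, x⁆ ∈ b) : y ∈ b := by
  have := hb.1
  exact hb.2 (adjoinElt b y hy) (adjoinElt_solvable b y hy) (le_adjoinElt b y hy)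
    (mem_adjoinElt_self b y hy)

variable [IsKilling ℂ g]

theorem perp_perp (V : Submodule ℂ g) : perp (perp V) = V :=
  LinearMap.BilinForm.orthogonal_orthogonal (IsKilling.killingForm_nondegenerate ℂ g)
    (LieModule.traceForm_isSymm ℂ g g).isRefl V

theorem MaxSolv.perp_le {b : LieSubalgebra ℂ g} (hb : MaxSolv b) :
    perp b.toSubmodule ≤ b.toSubmodule := by
  have := hb.1
  by_contra hcon
  let N : LieSubmodule ℂ b g :=
    { perp b.toSubmodule with
      lie_mem := by
        intro z m hm
        refine mem_perp.mpr fun v hv => ?_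
        change killingForm ℂ g ⁅(z : g), m⁆ v = 0
        rw [← lie_skew, map_neg, LinearMap.neg_apply, kill_inv, mem_perp.mp hm _ (b.lie_mem z.2 hv),
          neg_zero] }
  let Q : LieSubmodule ℂ b (g ⧸ b.toLieSubmodule) := N.map (LieSubmodule.Quotient.mk' b.toLieSubmodule)
  have hQ : Nontrivial Q := by
    obtain ⟨x, hx, hxb⟩ := Set.not_subset.mp hcon
    refine ⟨⟨⟨LieSubmodule.Quotient.mk' b.toLieSubmodule x, ?_⟩, 0, ?_⟩⟩
    · exact LieSubmodule.mem_map_of_mem (N := N) hx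
    · intro h
      have h1 : LieSubmodule.Quotient.mk' b.toLieSubmodule x = 0 := congrArg Subtype.val h
      exact hxb ((LieSubmodule.Quotient.mk_eq_zero _).mp h1)
  obtain ⟨χ, hχ⟩ := exists_nontrivial_weightSpace_of_isSolvable ℂ b Q
  obtain ⟨⟨⟨q, hq⟩, hqw⟩, hq0⟩ := exists_ne (0 : weightSpace Q χ)
  rw [mem_weightSpace] at hqw
  obtain ⟨x, hx, rfl⟩ := (LieSubmodule.mem_map _).mp hq
  have hx' : x ∈ perp b.toSubmodule := hx
  have hxb : x ∉ b := by
    intro h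
    apply hq0
    apply Subtype.ext; apply Subtype.ext
    exact (LieSubmodule.Quotient.mk_eq_zero _).mpr h
  have hcom : ∀ z ∈ b, ∃ c : ℂ, ⁅z, x⁆ - c • x ∈ b := by
    intro z hz
    refine ⟨χ ⟨z, hz⟩, ?_⟩
    have h1 := congrArg Subtype.val (hqw ⟨z, hz⟩)
    have h2 : LieSubmodule.Quotient.mk' b.toLieSubmodule (⁅z, x⁆ - χ ⟨z, hz⟩ • x) = 0 := by
      rw [map_sub, map_smul, sub_eq_zero]; exact h1
    exact (LieSubmodule.Quotient.mk_eq_zero _).mp h2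
  have hcom' : ∀ z ∈ b, ⁅z, x⁆ ∈ b.toSubmodule ⊔ Submodule.span ℂ {x} := by
    intro z hz
    obtain ⟨c, hc⟩ := hcom z hz
    rw [← sub_add_cancel ⁅z, x⁆ (c • x)]
    exact Submodule.add_mem_sup hc (Submodule.smul_mem _ _ (Submodule.mem_span_singleton_self x))
  let t : LieSubalgebra ℂ g :=
    { b.toSubmodule ⊔ Submodule.span ℂ {x} with
      lie_mem' := by
        intro a c ha hc
        obtain ⟨a1, ha1, a2, ha2, rfl⟩ := Submodule.mem_sup.mp ha
        obtain ⟨b1, hb1, b2, hb2, rfl⟩ := Submodule.mem_sup.mp hc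
        obtain ⟨c, rfl⟩ := Submodule.mem_span_singleton.mp ha2
        obtain ⟨d, rfl⟩ := Submodule.mem_span_singleton.mp hb2
        simp only [add_lie, lie_add, smul_lie, lie_smul, lie_self, smul_zero, add_zero]
        refine Submodule.add_mem _ (Submodule.add_mem _ (Submodule.mem_sup_left (b.lie_mem ha1 hb1))
          (Submodule.smul_mem _ _ ?_)) (Submodule.smul_mem _ _ (hcom' a1 ha1))
        rw [← lie_skew]; exact Submodule.neg_mem _ (hcom' b1 hb1) }
  have k1 : ∀ u ∈ b, ∀ v ∈ b, ∀ w ∈ b, killingForm ℂ g u ⁅v, w⁆ = 0 := by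
    intro u hu v hv w hw
    rw [kill_symm]
    exact killing_zero_of_nilp b (b.lie_mem hv hw) hu (nilp_of_lie b hv hw)
  have k2 : ∀ v ∈ b, killingForm ℂ g x v = 0 := fun v hv => mem_perp.mp hx' v hv
  have k3 : ∀ u ∈ b, ∀ v ∈ b, killingForm ℂ g u ⁅v, x⁆ = 0 := by
    intro u hu v hv
    rw [← kill_inv, kill_symm]; exact k2 _ (b.lie_mem hu hv)
  have k4 : ∀ v : g, killingForm ℂ g x ⁅v, x⁆ = 0 := by
    intro v
    rw [← lie_skew, map_neg, ← kill_inv, lie_self]; simp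
  have k3' : ∀ u ∈ b, ∀ v ∈ b, killingForm ℂ g u ⁅x, v⁆ = 0 := by
    intro u hu v hv
    rw [← lie_skew, map_neg, k3 u hu v hv, neg_zero]
  have k4' : ∀ v : g, killingForm ℂ g x ⁅x, v⁆ = 0 := by
    intro v
    rw [← kill_inv, lie_self]; simp
  have ht : IsSolvable t := by
    apply solvable_of_killing
    intro u hu v hv w hw
    obtain ⟨u1, hu1, u2, hu2, rfl⟩ := Submodule.mem_sup.mp hu
    obtain ⟨v1, hv1, v2, hv2, rfl⟩ := Submodule.mem_sup.mp hv
    obtain ⟨w1, hw1, w2, hw2, rfl⟩ := Submodule.mem_sup.mp hw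
    obtain ⟨c, rfl⟩ := Submodule.mem_span_singleton.mp hu2
    obtain ⟨d, rfl⟩ := Submodule.mem_span_singleton.mp hv2
    obtain ⟨e, rfl⟩ := Submodule.mem_span_singleton.mp hw2
    simp only [add_lie, lie_add, smul_lie, lie_smul, lie_self, smul_zero, add_zero, map_add,
      LinearMap.add_apply, map_smul, LinearMap.smul_apply, k1 u1 hu1 v1 hv1 w1 hw1,
      k2 _ (b.lie_mem hv1 hw1), k3 u1 hu1 v1 hv1, k4, k4', k3' u1 hu1 w1 hw1]
  exact hxb (hb.2 t ht (fun z hz => Submodule.mem_sup_left hz)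
    (Submodule.mem_sup_right (Submodule.mem_span_singleton_self x)))

theorem MaxSolv.nilp {b : LieSubalgebra ℂ g} (hb : MaxSolv b) {x : g}
    (hx : x ∈ perp b.toSubmodule) : IsNilpotent (ad ℂ g x) := by
  have hxb := hb.perp_le hx
  obtain ⟨y, hy, hk⟩ := lemmaN x
  exact hk (mem_perp.mp hx y (hb.mem_of_norm
    (hy b.toSubmodule b.toSubmodule le_rfl fun w hw => b.lie_mem hxb hw)))


theorem par_perp_le_borel {b p : LieSubalgebra ℂ g} (hb : MaxSolv b) (hbp : b ≤ p) : perp p.toSubmodule ≤ b.toSubmodule :=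
  (perp_anti hbp).trans hb.perp_le

theorem par_perp_le {b p : LieSubalgebra ℂ g} (hb : MaxSolv b) (hbp : b ≤ p) : perp p.toSubmodule ≤ p.toSubmodule :=
  (par_perp_le_borel hb hbp).trans hbp

theorem par_nilp {b p : LieSubalgebra ℂ g} (hb : MaxSolv b) (hbp : b ≤ p) {x : g} (hx : x ∈ perp p.toSubmodule) : IsNilpotent (ad ℂ g x) :=
  hb.nilp (perp_anti hbp hx)

theorem perp_ideal {p : LieSubalgebra ℂ g} {x y : g} (hx : x ∈ p) (hy : y ∈ perp p.toSubmodule) :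
    ⁅x, y⁆ ∈ perp p.toSubmodule := by
  refine mem_perp.mpr fun v hv => ?_
  rw [← lie_skew, map_neg, LinearMap.neg_apply, kill_inv, mem_perp.mp hy _ (p.lie_mem hx hv), neg_zero]

theorem perp_ideal' {p : LieSubalgebra ℂ g} {x y : g} (hx : x ∈ p) (hy : y ∈ perp p.toSubmodule) :
    ⁅y, x⁆ ∈ perp p.toSubmodule := by
  rw [← lie_skew]; exact Submodule.neg_mem _ (perp_ideal hx hy)

theorem par_perp_le_derived {b p : LieSubalgebra ℂ g} (hb : MaxSolv b) (hbp : b ≤ p) :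
    perp p.toSubmodule ≤ Submodule.span ℂ {z : g | ∃ x ∈ p.toSubmodule, ∃ y ∈ p.toSubmodule, ⁅x, y⁆ = z} := by
  rw [← perp_perp (Submodule.span ℂ _)]
  apply perp_anti
  intro x hx
  have h1 : ∀ a ∈ p, ⁅x, a⁆ ∈ perp p.toSubmodule := by
    intro a ha
    refine mem_perp.mpr fun c hc => ?_
    rw [kill_inv]
    exact mem_perp.mp hx _ (Submodule.subset_span ⟨a, ha, c, hc, rfl⟩)
  exact hbp (hb.mem_of_norm fun a ha => par_perp_le_borel hb hbp (h1 a (hbp ha)))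

/-- Elements of `p` which are central modulo the orthogonal. -/
def zMod (p : LieSubalgebra ℂ g) : LieSubalgebra ℂ g where
  carrier := {x | x ∈ p ∧ ∀ y ∈ p, ⁅x, y⁆ ∈ perp p.toSubmodule}
  zero_mem' := ⟨p.zero_mem, fun y _ => by simp⟩
  add_mem' := by
    rintro a c ⟨ha, ha'⟩ ⟨hc, hc'⟩
    exact ⟨p.add_mem ha hc, fun y hy => by rw [add_lie]; exact Submodule.add_mem _ (ha' y hy) (hc' y hy)⟩
  smul_mem' := by
    rintro a c ⟨hc, hc'⟩
    exact ⟨p.smul_mem a hc, fun y hy => by rw [smul_lie]; exact Submodule.smul_mem _ _ (hc' y hy)⟩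
  lie_mem' := by
    rintro a c ⟨ha, ha'⟩ ⟨hc, hc'⟩
    exact ⟨p.lie_mem ha hc, fun y hy => perp_ideal' hy (ha' c hc)⟩

theorem zMod_solvable {b p : LieSubalgebra ℂ g} (hb : MaxSolv b) (hbp : b ≤ p) : IsSolvable (zMod p) := by
  have := hb.1
  exact solvable_of_lie_mem b _ fun a ha c hc => par_perp_le_borel hb hbp (ha.2 c hc.1)

theorem solv_ideal_le {b p : LieSubalgebra ℂ g} (hb : MaxSolv b) (hbp : b ≤ p) (J : LieSubalgebra ℂ g) [IsSolvable J] (hJp : J ≤ p)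
    (hJ : ∀ x ∈ p, ∀ y ∈ J, ⁅x, y⁆ ∈ J) : J ≤ zMod p := by
  intro a ha
  refine ⟨hJp ha, fun y hy => mem_perp.mpr fun w hw => ?_⟩
  have h1 : IsNilpotent (ad ℂ g ⁅a, y⁆) := by
    have := adjoinElt_solvable J y (hJ y hy)
    exact nilp_of_lie (adjoinElt J y (hJ y hy)) (le_adjoinElt _ _ _ ha) (mem_adjoinElt_self _ _ _)
  have h2 : ⁅a, y⁆ ∈ J := by rw [← lie_skew]; exact J.neg_mem (hJ y hy a ha)
  have := adjoinElt_solvable J w (hJ w hw)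
  exact killing_zero_of_nilp (adjoinElt J w (hJ w hw)) (le_adjoinElt _ _ _ h2)
    (mem_adjoinElt_self _ _ _) h1

theorem zMod_inf_derived {b p : LieSubalgebra ℂ g} (hb : MaxSolv b) (hbp : b ≤ p) {x : g} (hx : x ∈ zMod p)
    (hxd : x ∈ Submodule.span ℂ {z : g | ∃ x ∈ p.toSubmodule, ∃ y ∈ p.toSubmodule, ⁅x, y⁆ = z}) :
    x ∈ perp p.toSubmodule := by
  have h1 : ∀ z ∈ zMod p, killingForm ℂ g x z = 0 := by
    intro z hz
    clear hx
    induction hxd using Submodule.span_induction with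
    | mem x hx =>
      obtain ⟨a, ha, c, hc, rfl⟩ := hx
      rw [kill_inv, kill_symm]
      have : ⁅c, z⁆ ∈ perp p.toSubmodule := by
        rw [← lie_skew]; exact Submodule.neg_mem _ (hz.2 c hc)
      exact mem_perp.mp this a ha
    | zero => simp
    | add a c _ _ ha hc => rw [map_add, LinearMap.add_apply, ha, hc, add_zero]
    | smul a c _ ha => rw [map_smul, LinearMap.smul_apply, ha, smul_zero]
  obtain ⟨y, hy, hk⟩ := lemmaN x
  have hy' := hy (perp p.toSubmodule) p.toSubmodule (par_perp_le hb hbp) hx.2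
  have hyb : y ∈ b := hb.mem_of_norm fun a ha => par_perp_le_borel hb hbp (hy' a (hbp ha))
  have hnil := hk (h1 y ⟨hbp hyb, hy'⟩)
  refine mem_perp.mpr fun w hw => ?_
  have := zMod_solvable hb hbp
  have hw' : ∀ z ∈ zMod p, ⁅w, z⁆ ∈ zMod p := by
    intro z hz
    have : ⁅w, z⁆ ∈ perp p.toSubmodule := by
      rw [← lie_skew]; exact Submodule.neg_mem _ (hz.2 w hw)
    exact ⟨par_perp_le hb hbp this, fun v hv => perp_ideal' hv this⟩
  have := adjoinElt_solvable (zMod p) w hw'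
  exact killing_zero_of_nilp (adjoinElt (zMod p) w hw') (le_adjoinElt _ _ _ hx)
    (mem_adjoinElt_self _ _ _) hnil

end CPar

namespace CPar
open Module LieAlgebra LieModule
set_option linter.unusedSectionVars false
variable {g : Type*} [LieRing g] [LieAlgebra ℂ g] [FiniteDimensional ℂ g]

theorem lieQuot (b : LieSubalgebra ℂ g) [IsSolvable b] (M : Submodule ℂ g)
    (hM : ∀ z ∈ b, ∀ m ∈ M, ⁅z, m⁆ ∈ M) {y0 : g} (hy0 : y0 ∈ M) (hy0b : y0 ∉ b) :
    ∃ x ∈ M, x ∉ b ∧ ∃ χ : b → ℂ, ∀ z : b, ⁅(z : g), x⁆ - χ z • x ∈ b := by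
  let N : LieSubmodule ℂ b g :=
    { M with
      lie_mem := by
        intro z m hm
        exact hM z z.2 m hm }
  let Q : LieSubmodule ℂ b (g ⧸ b.toLieSubmodule) := N.map (LieSubmodule.Quotient.mk' b.toLieSubmodule)
  have hQ : Nontrivial Q := by
    refine ⟨⟨⟨LieSubmodule.Quotient.mk' b.toLieSubmodule y0, ?_⟩, 0, ?_⟩⟩
    · exact LieSubmodule.mem_map_of_mem (N := N) hy0
    · intro h
      have h1 : LieSubmodule.Quotient.mk' b.toLieSubmodule y0 = 0 := congrArg Subtype.val h
      exact hy0b ((LieSubmodule.Quotient.mk_eq_zero _).mp h1)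
  obtain ⟨χ, hχ⟩ := exists_nontrivial_weightSpace_of_isSolvable ℂ b Q
  obtain ⟨⟨⟨q, hq⟩, hqw⟩, hq0⟩ := exists_ne (0 : weightSpace Q χ)
  rw [mem_weightSpace] at hqw
  obtain ⟨x, hx, rfl⟩ := (LieSubmodule.mem_map _).mp hq
  refine ⟨x, hx, ?_, χ, ?_⟩
  · intro h
    apply hq0
    apply Subtype.ext; apply Subtype.ext
    exact (LieSubmodule.Quotient.mk_eq_zero _).mpr h
  · intro z
    have h1 := congrArg Subtype.val (hqw z)
    have h2 : LieSubmodule.Quotient.mk' b.toLieSubmodule (⁅(z : g), x⁆ - χ z • x) = 0 := by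
      rw [map_sub, map_smul, sub_eq_zero]; exact h1
    exact (LieSubmodule.Quotient.mk_eq_zero _).mp h2

theorem mem_zr (j : LieSubalgebra ℂ g) [LieRing.IsNilpotent j] {x : g} :
    x ∈ zeroRootSubalgebra ℂ g j ↔ ∀ z ∈ j, ∃ k : ℕ, ((ad ℂ g z) ^ k) x = 0 := by
  rw [mem_zeroRootSubalgebra]
  exact ⟨fun h z hz => h ⟨z, hz⟩, fun h z => h z z.2⟩

theorem engel_step (j : LieSubalgebra ℂ g) [LieRing.IsNilpotent j] (M : Submodule ℂ g)
    (hM : ∀ z ∈ j, ∀ m ∈ M, ⁅z, m⁆ ∈ M) (hM0 : M ≤ (zeroRootSubalgebra ℂ g j).toSubmodule)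
    {y0 : g} (hy0 : y0 ∈ M) (hy0b : y0 ∉ j) :
    ∃ x ∈ M, x ∉ j ∧ ∀ z ∈ j, ⁅z, x⁆ ∈ j := by
  obtain ⟨x, hx, hxj, χ, hχ⟩ := lieQuot j M hM hy0 hy0b
  refine ⟨x, hx, hxj, fun z hz => ?_⟩
  obtain ⟨k, hk⟩ := (mem_zr j).mp (hM0 hx) z hz
  have h1 : ∀ k : ℕ, ((ad ℂ g z) ^ k) x - (χ ⟨z, hz⟩) ^ k • x ∈ j := by
    intro k
    induction k with
    | zero => simp
    | succ k ih =>
      have e : ((ad ℂ g z) ^ (k + 1)) x - (χ ⟨z, hz⟩) ^ (k + 1) • x =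
        ⁅z, ((ad ℂ g z) ^ k) x - (χ ⟨z, hz⟩) ^ k • x⁆ +
          (χ ⟨z, hz⟩) ^ k • (⁅z, x⁆ - χ ⟨z, hz⟩ • x) := by
        rw [pow_succ', Module.End.mul_apply, ad_apply, lie_sub, lie_smul, smul_sub, smul_smul, pow_succ]
        abel
      rw [e]
      exact j.add_mem (j.lie_mem hz ih) (j.smul_mem _ (hχ ⟨z, hz⟩))
  have h2 := h1 k
  rw [hk, zero_sub] at h2
  have h3 : χ ⟨z, hz⟩ = 0 := by
    by_contra hne
    apply hxj
    have h4 := j.smul_mem (((χ ⟨z, hz⟩) ^ k)⁻¹) (j.neg_mem h2)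
    rwa [neg_neg, smul_smul, inv_mul_cancel₀ (pow_ne_zero _ hne), one_smul] at h4
  have h5 := hχ ⟨z, hz⟩
  rwa [h3, zero_smul, sub_zero] at h5

/-- `j` is a Cartan subalgebra of `p`. -/
structure CartanIn (p j : LieSubalgebra ℂ g) : Prop where
  le : j ≤ p
  nilp : LieRing.IsNilpotent j
  norm : ∀ x ∈ p, (∀ y ∈ j, ⁅x, y⁆ ∈ j) → x ∈ j

theorem inf_zr_le {p j : LieSubalgebra ℂ g} [LieRing.IsNilpotent j] (h : CartanIn p j) {x : g}
    (hx : x ∈ p) (hx0 : x ∈ zeroRootSubalgebra ℂ g j) : x ∈ j := by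
  by_contra hxj
  obtain ⟨y, hy, hyj, hn⟩ := engel_step j (p.toSubmodule ⊓ (zeroRootSubalgebra ℂ g j).toSubmodule)
    (fun z hz m hm => ⟨p.lie_mem (h.le hz) hm.1,
      (zeroRootSubalgebra ℂ g j).lie_mem (le_zeroRootSubalgebra ℂ g j hz) hm.2⟩)
    inf_le_right (y0 := x) ⟨hx, hx0⟩ hxj
  exact hyj (h.norm y hy.1 fun z hz => by rw [← lie_skew]; exact j.neg_mem (hn z hz))

variable [IsKilling ℂ g]

theorem cartan_of_par {b p : LieSubalgebra ℂ g} (hb : MaxSolv b) (hbp : b ≤ p)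
    {j : LieSubalgebra ℂ g} (hj : CartanIn p j) : j.IsCartanSubalgebra := by
  have := hj.nilp
  rw [← zeroRootSubalgebra_eq_iff_is_cartan]
  refine le_antisymm ?_ (le_zeroRootSubalgebra ℂ g j)
  intro y0 hy0
  by_contra hy0j
  obtain ⟨y, hy, hyj, hn⟩ := engel_step j (zeroRootSubalgebra ℂ g j).toSubmodule
    (fun z hz m hm => (zeroRootSubalgebra ℂ g j).lie_mem (le_zeroRootSubalgebra ℂ g j hz) hm)
    le_rfl hy0 hy0j
  have hn' : ∀ z ∈ j, ⁅y, z⁆ ∈ j := fun z hz => by rw [← lie_skew]; exact j.neg_mem (hn z hz)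
  apply hyj
  refine inf_zr_le hj ?_ hy
  change y ∈ p.toSubmodule
  rw [← perp_perp p.toSubmodule]
  refine mem_perp.mpr fun v hv => ?_
  let n : LieSubmodule ℂ j g :=
    { perp p.toSubmodule with
      lie_mem := fun {z m} hm => perp_ideal (hj.le z.2) hm }
  have hc := (isCompl_genWeightSpace_zero_posFittingComp ℂ j n).codisjoint.eq_top
  have hv' : (⟨v, hv⟩ : n) ∈ genWeightSpace n (0 : j → ℂ) ⊔ posFittingComp ℂ j n := by
    rw [hc]; trivial
  obtain ⟨v0, hv0, v1, hv1, hsum⟩ := (LieSubmodule.mem_sup _ _ _).mp hv'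
  have hvs : v = (v0 : g) + (v1 : g) := (congrArg Subtype.val hsum).symm
  have h1 : (v1 : g) ∈ posFittingComp ℂ j g :=
    map_posFittingComp_le n.incl (LieSubmodule.mem_map_of_mem hv1)
  have h0 : (v0 : g) ∈ zeroRootSubalgebra ℂ g j := by
    have : n.incl v0 ∈ genWeightSpace g (0 : j → ℂ) :=
      map_genWeightSpace_le n.incl (LieSubmodule.mem_map_of_mem hv0)
    exact this
  have h0p : (v0 : g) ∈ j := inf_zr_le hj (par_perp_le hb hbp v0.2) h0
  have k1 := killingForm_eq_zero_of_mem_zeroRoot_mem_posFitting ℂ g j hy h1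
  have := adjoinElt_solvable j y hn'
  have k0 := killing_zero_of_nilp (adjoinElt j y hn') (le_adjoinElt _ _ _ h0p)
    (mem_adjoinElt_self _ _ _) (par_nilp hb hbp v0.2)
  rw [hvs, map_add, k1, kill_symm, k0, add_zero]

theorem locnilp {V : Type*} [AddCommGroup V] [Module ℂ V] [FiniteDimensional ℂ V]
    (f : Module.End ℂ V) (h : ∀ v, ∃ k : ℕ, (f ^ k) v = 0) : IsNilpotent f := by
  refine ⟨finrank ℂ V, LinearMap.ext fun v => ?_⟩
  have hv : v ∈ f.maxGenEigenspace 0 := by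
    rw [Module.End.mem_maxGenEigenspace]
    simpa using h v
  rw [Module.End.maxGenEigenspace_eq_genEigenspace_finrank] at hv
  rw [Module.End.mem_genEigenspace_nat] at hv
  simpa using hv

theorem cartan_of_levi {b p : LieSubalgebra ℂ g} (hb : MaxSolv b) (hbp : b ≤ p)
    {l j : LieSubalgebra ℂ g} (hlp : l ≤ p) (hln : l.toSubmodule ⊓ perp p.toSubmodule = ⊥)
    (hsup : l.toSubmodule ⊔ perp p.toSubmodule = p.toSubmodule)
    (hj : CartanIn l j) : j.IsCartanSubalgebra := by
  have := hj.nilp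
  set z0 := zeroRootSubalgebra ℂ g j
  have hjz : j ≤ z0 := le_zeroRootSubalgebra ℂ g j
  let q : LieSubalgebra ℂ g := p ⊓ z0
  have dec : ∀ x ∈ q, ∃ a ∈ j, ∃ c ∈ perp p.toSubmodule, c ∈ z0 ∧ x = a + c := by
    rintro x ⟨hxp, hx0⟩
    have hxp' : x ∈ l.toSubmodule ⊔ perp p.toSubmodule := by rw [hsup]; exact hxp
    obtain ⟨a, ha, c, hc, rfl⟩ := Submodule.mem_sup.mp hxp'
    have key : ∀ z ∈ j, ∃ k : ℕ, ((ad ℂ g z) ^ k) a = 0 ∧ ((ad ℂ g z) ^ k) c = 0 := by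
      intro z hz
      obtain ⟨k, hk⟩ := (mem_zr j).mp hx0 z hz
      have h1 : ∀ k : ℕ, ((ad ℂ g z) ^ k) a ∈ l := by
        intro k
        induction k with
        | zero => exact ha
        | succ k ih => rw [pow_succ', Module.End.mul_apply]; exact l.lie_mem (hj.le hz) ih
      have h2 : ∀ k : ℕ, ((ad ℂ g z) ^ k) c ∈ perp p.toSubmodule := by
        intro k
        induction k with
        | zero => exact hc
        | succ k ih => rw [pow_succ', Module.End.mul_apply]; exact perp_ideal (hlp (hj.le hz)) ih
      rw [map_add] at hk
      have h3 : ((ad ℂ g z) ^ k) a ∈ l.toSubmodule ⊓ perp p.toSubmodule := by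
        refine ⟨h1 k, ?_⟩
        have : ((ad ℂ g z) ^ k) a = - ((ad ℂ g z) ^ k) c := eq_neg_of_add_eq_zero_left hk
        rw [this]
        exact Submodule.neg_mem _ (h2 k)
      rw [hln, Submodule.mem_bot] at h3
      refine ⟨k, h3, ?_⟩
      rwa [h3, zero_add] at hk
    exact ⟨a, inf_zr_le hj ha ((mem_zr j).mpr fun z hz => (key z hz).imp fun k h => h.1), c, hc,
      (mem_zr j).mpr fun z hz => (key z hz).imp fun k h => h.2, rfl⟩
  have hsol : IsSolvable q := by
    apply solvable_of_killing
    intro u hu v hv w hw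
    obtain ⟨a, ha, c, hc, hc0, rfl⟩ := dec u hu
    obtain ⟨a1, ha1, c1, hc1, hc10, rfl⟩ := dec v hv
    obtain ⟨a2, ha2, c2, hc2, hc20, rfl⟩ := dec w hw
    have h1 : ⁅a1 + c1, a2 + c2⁆ - ⁅a1, a2⁆ ∈ perp p.toSubmodule := by
      have e : ⁅a1 + c1, a2 + c2⁆ - ⁅a1, a2⁆ = ⁅a1, c2⁆ + ⁅c1, a2 + c2⁆ := by
        simp only [add_lie, lie_add]; abel
      rw [e]
      exact Submodule.add_mem _ (perp_ideal (hlp (hj.le ha1)) hc2) (perp_ideal' hw.1 hc1)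
    have h2 := mem_perp.mp h1 _ hu.1
    rw [kill_symm, map_sub, sub_eq_zero] at h2
    rw [h2, map_add, LinearMap.add_apply, mem_perp.mp hc _ (hlp (hj.le (j.lie_mem ha1 ha2))), add_zero,
      kill_symm]
    exact killing_zero_of_nilp j (j.lie_mem ha1 ha2) ha (nilp_of_lie j ha1 ha2)
  have powq : ∀ (x : q) (k : ℕ) (y : q), (((ad ℂ q x) ^ k) y : g) = ((ad ℂ g (x : g)) ^ k) (y : g) := by
    intro x k
    induction k with
    | zero => intro y; rfl
    | succ k ih => intro y; rw [pow_succ, pow_succ, Module.End.mul_apply, Module.End.mul_apply, ih]; rfl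
  have hnil : LieRing.IsNilpotent q := by
    rw [LieAlgebra.isNilpotent_iff_forall (R := ℂ)]
    intro x
    obtain ⟨a, ha, c, hc, hc0, hx⟩ := dec x x.2
    have haq : a ∈ q := ⟨hlp (hj.le ha), hjz ha⟩
    have hcq : c ∈ q := ⟨par_perp_le hb hbp hc, hc0⟩
    have hx' : x = ⟨a, haq⟩ + ⟨c, hcq⟩ := Subtype.ext hx
    rw [hx']
    refine (lie_aux (L := q) (finrank ℂ q) q le_rfl).2.2 ⟨a, haq⟩ ⟨c, hcq⟩ ?_ ?_
    · apply locnilp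
      intro y
      obtain ⟨k, hk⟩ := (mem_zr j).mp y.2.2 a ha
      exact ⟨k, Subtype.ext ((powq ⟨a, haq⟩ k y).trans hk)⟩
    · obtain ⟨k, hk⟩ := par_nilp hb hbp hc
      refine ⟨k, LinearMap.ext fun y => Subtype.ext ((powq ⟨c, hcq⟩ k y).trans ?_)⟩
      rw [hk]; rfl
  have hq : CartanIn p q := by
    refine ⟨inf_le_left, hnil, fun x hx hn => ⟨hx, (mem_zr j).mpr fun z hz => ?_⟩⟩
    have h1 : ⁅x, z⁆ ∈ q := hn z ⟨hlp (hj.le hz), hjz hz⟩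
    obtain ⟨k, hk⟩ := (mem_zr j).mp h1.2 z hz
    refine ⟨k + 1, ?_⟩
    rw [pow_succ, Module.End.mul_apply, ad_apply, ← lie_skew, map_neg, hk, neg_zero]
  have hqc : q.IsCartanSubalgebra := cartan_of_par hb hbp hq
  have hqj : q = j := by
    refine le_antisymm (fun x hx => ?_) (fun x hx => ⟨hlp (hj.le hx), hjz hx⟩)
    obtain ⟨a, ha, c, hc, hc0, rfl⟩ := dec x hx
    have : c = 0 := IsKilling.eq_zero_of_isNilpotent_ad_of_mem_isCartanSubalgebra ℂ g q
      (⟨par_perp_le hb hbp hc, hc0⟩ : c ∈ q) (par_nilp hb hbp hc)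
    rwa [this, add_zero]
  rwa [hqj] at hqc

end CPar

namespace CPar
open Module LieAlgebra LieModule
set_option linter.unusedSectionVars false
section roots
variable {g : Type*} [LieRing g] [LieAlgebra ℂ g] [FiniteDimensional ℂ g] [IsKilling ℂ g]
  (H : LieSubalgebra ℂ g) [H.IsCartanSubalgebra]

/-- Root spaces as plain subspaces, indexed by arbitrary functions. -/
noncomputable def R (α : H → ℂ) : Submodule ℂ g := (rootSpace H α).toSubmodule

variable {H}

theorem mem_R {α : H → ℂ} {x : g} : x ∈ R H α ↔ x ∈ rootSpace H α := Iff.rfl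

theorem R_zero : R H 0 = H.toSubmodule := by
  have := rootSpace_zero_eq ℂ g H
  ext x
  rw [mem_R, this]
  rfl

theorem R_lie_H {α : H → ℂ} {x : g} (hx : x ∈ R H α) (h : H) : ⁅(h : g), x⁆ = α h • x :=
  IsKilling.lie_eq_smul_of_mem_rootSpace hx h

theorem R_lie {α β : H → ℂ} {x y : g} (hx : x ∈ R H α) (hy : y ∈ R H β) :
    ⁅x, y⁆ ∈ R H (α + β) :=
  lie_mem_genWeightSpace_of_mem_genWeightSpace hx hy

theorem R_orth {α β : H → ℂ} {x y : g} (hx : x ∈ R H α) (hy : y ∈ R H β) (h : α + β ≠ 0) :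
    killingForm ℂ g x y = 0 :=
  killingForm_apply_eq_zero_of_mem_rootSpace_of_add_ne_zero ℂ g H hx hy h

theorem R_pair {α : H → ℂ} {x : g} (hx : x ∈ R H α)
    (h : ∀ y ∈ R H (-α), killingForm ℂ g x y = 0) : x = 0 := by
  simpa using mem_ker_killingForm_of_mem_rootSpace_of_forall_rootSpace_neg ℂ g H hx h

theorem R_one {α : H → ℂ} (hα : α ≠ 0) {x y : g} (hx : x ∈ R H α) (hx0 : x ≠ 0)
    (hy : y ∈ R H α) : ∃ c : ℂ, c • x = y := by
  have hne : genWeightSpace g α ≠ ⊥ := by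
    intro h
    apply hx0
    have : x ∈ rootSpace H α := hx
    rw [rootSpace, h] at this
    simpa using this
  let A : Weight ℂ H g := ⟨α, hne⟩
  have h1 := IsKilling.finrank_rootSpace_eq_one A (by
    intro h; apply hα; exact h)
  obtain ⟨c, hc⟩ := (finrank_eq_one_iff_of_nonzero' (⟨x, hx⟩ : rootSpace H α)
    (fun h => hx0 (congrArg Subtype.val h))).mp h1 ⟨y, hy⟩
  exact ⟨c, congrArg Subtype.val hc⟩

theorem R_le_of_mem {α : H → ℂ} (hα : α ≠ 0) {U : Submodule ℂ g} {x : g} (hx : x ∈ R H α)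
    (hx0 : x ≠ 0) (hxU : x ∈ U) : R H α ≤ U := by
  intro y hy
  obtain ⟨c, rfl⟩ := R_one hα hx hx0 hy
  exact U.smul_mem c hxU

theorem Hstable_le {U W : Submodule ℂ g} (hU : ∀ h ∈ H, ∀ u ∈ U, ⁅h, u⁆ ∈ U)
    (h : ∀ α : H → ℂ, ∀ x ∈ U, x ∈ R H α → x ∈ W) : U ≤ W := by
  let N : LieSubmodule ℂ H g := { U with lie_mem := fun {z m} hm => hU z z.2 m hm }
  have h1 := eq_iSup_inf_genWeightSpace (K := ℂ) (L := H) (M := g) (N := N)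
  intro x hx
  have hx' : x ∈ N := hx
  rw [h1] at hx'
  refine LieSubmodule.iSup_induction' (motive := fun y _ => y ∈ W) _ ?_ (W.zero_mem) ?_ hx'
  · intro χ y hy
    exact h χ y hy.1 hy.2
  · intro y z _ _ hy hz
    exact W.add_mem hy hz

theorem R_neg_ne {α : H → ℂ} (h : R H α ≠ ⊥) : R H (-α) ≠ ⊥ := by
  intro h'
  obtain ⟨x, hx, hx0⟩ := Submodule.exists_mem_ne_zero_of_ne_bot h
  apply hx0
  apply R_pair hx
  rw [h']
  intro y hy
  rw [(Submodule.mem_bot ℂ).mp hy, map_zero]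

theorem R_nilp {α : H → ℂ} (hα : α ≠ 0) {x : g} (hx : x ∈ R H α) :
    IsNilpotent (ad ℂ g x) :=
  LieAlgebra.isNilpotent_ad_of_mem_rootSpace H hα hx

theorem R_weight {α : H → ℂ} {x : g} (hx : x ∈ R H α) (hx0 : x ≠ 0) :
    ∃ A : Weight ℂ H g, (A : H → ℂ) = α := by
  have hne : genWeightSpace g α ≠ ⊥ := by
    intro h
    apply hx0
    have : x ∈ rootSpace H α := hx
    rw [rootSpace, h] at this
    simpa using this
  exact ⟨⟨α, hne⟩, rfl⟩

theorem R_lie_ne {α β : H → ℂ} (hα : α ≠ 0) (hβ : β ≠ 0) (hs : R H (α + β) ≠ ⊥) {x e : g}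
    (hx : x ∈ R H α) (hx0 : x ≠ 0) (he : e ∈ R H β) (he0 : e ≠ 0) : ⁅e, x⁆ ≠ 0 := by
  intro hex
  obtain ⟨B, rfl⟩ := R_weight he he0
  have hB : B.IsNonZero := fun h => hβ h
  obtain ⟨h, e0, f, t, he0m, hfm⟩ := IsKilling.exists_isSl2Triple_of_weight_isNonZero hB
  have hh := t.h_eq_coroot hB he0m hfm
  have hcor := IsKilling.root_apply_coroot hB
  obtain ⟨c, rfl⟩ := R_one hβ he he0 (y := e0) he0m
  have hex' : ⁅c • e, x⁆ = 0 := by rw [smul_lie, hex, smul_zero]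
  have P : t.HasPrimitiveVectorWith x (α (IsKilling.coroot B)) :=
    ⟨hx0, by rw [hh]; exact R_lie_H hx _, hex'⟩
  obtain ⟨m, hm⟩ := P.exists_nat
  obtain ⟨y, hy, hy0⟩ := Submodule.exists_mem_ne_zero_of_ne_bot (R_neg_ne hs)
  have hey : ⁅c • e, y⁆ = 0 := by
    have h1 : ⁅c • e, y⁆ ∈ R H (-α) := by
      have := R_lie (H := H) (x := c • e) he0m hy
      convert this using 1
      abel_nf
    apply R_pair h1
    intro z hz
    rw [neg_neg] at hz
    obtain ⟨d, rfl⟩ := R_one hα hx hx0 hz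
    rw [← lie_skew, map_neg, LinearMap.neg_apply, kill_inv, lie_smul, hex']
    simp
  have P2 : t.HasPrimitiveVectorWith y ((-(α + B)) (IsKilling.coroot B)) :=
    ⟨hy0, by rw [hh]; exact R_lie_H hy _, hey⟩
  obtain ⟨m', hm'⟩ := P2.exists_nat
  simp only [Pi.neg_apply, Pi.add_apply, hm, hcor] at hm'
  have : ((m' + m + 2 : ℕ) : ℂ) = 0 := by push_cast; rw [← hm']; ring
  norm_cast at this

end roots
end CPar

namespace CPar
open Module LieAlgebra LieModule
set_option linter.unusedSectionVars false
section levi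
variable {g : Type*} [LieRing g] [LieAlgebra ℂ g] [FiniteDimensional ℂ g] [IsKilling ℂ g]
  {H : LieSubalgebra ℂ g} [H.IsCartanSubalgebra]

/-- complex conjugation on the Cartan subalgebra -/
def Conj (x y : H) : Prop := ∀ A : Weight ℂ H g, A y = (starRingEnd ℂ) (A x)

theorem Conj.add {x y x' y' : H} (h : Conj x y) (h' : Conj x' y') : Conj (x + x') (y + y') := by
  intro A
  have := h A
  have := h' A
  rw [← Weight.coe_coe] at *
  simp_all

theorem Conj.smul {x y : H} (h : Conj x y) (c : ℂ) : Conj (c • x) ((starRingEnd ℂ c) • y) := by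
  intro A
  have := h A
  rw [← Weight.coe_coe] at *
  simp_all

theorem conj_coroot (A : Weight ℂ H g) : Conj (IsKilling.coroot A) (IsKilling.coroot A) := by
  intro B
  rw [IsKilling.apply_coroot_eq_cast]
  simp

theorem Conj.zero : Conj (0 : H) 0 := by
  intro A
  rw [← Weight.coe_coe]
  simp

theorem exists_Conj (x : H) : ∃ y : H, Conj x y := by
  have hx : x ∈ Submodule.span ℂ (Set.range (IsKilling.rootSystem H).coroot) := by
    rw [RootPairing.IsRootSystem.span_coroot_eq_top (P := IsKilling.rootSystem H)]
    trivial
  induction hx using Submodule.span_induction with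
  | mem x h =>
    obtain ⟨A, rfl⟩ := h
    exact ⟨_, conj_coroot A.1⟩
  | zero => exact ⟨0, Conj.zero⟩
  | add x y _ _ hx hy =>
    obtain ⟨a, ha⟩ := hx
    obtain ⟨b, hb⟩ := hy
    exact ⟨_, ha.add hb⟩
  | smul c x _ hx =>
    obtain ⟨a, ha⟩ := hx
    exact ⟨_, ha.smul c⟩

theorem conj_pos {x y : H} (h : Conj x y) (hk : killingForm ℂ g (x : g) (y : g) = 0) : x = 0 := by
  have h1 := congrArg (fun f => f x y) (IsKilling.restrict_killingForm_eq_sum (K := ℂ) (L := g) (H := H))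
  simp only [LinearMap.BilinForm.restrict_apply, LinearMap.coe_sum, Finset.sum_apply,
    LinearMap.coe_smulRight, LinearMap.smul_apply, smul_eq_mul] at h1
  have h1 : (killingForm ℂ g (x : g) (y : g)) = ∑ A ∈ H.root, (A x * A y) := by
    refine Eq.trans ?_ (h1.trans ?_)
    · rfl
    · refine Finset.sum_congr rfl fun A _ => ?_
      rfl
  rw [hk] at h1
  have h2 : ∑ A ∈ H.root, (Complex.normSq (A x)) = 0 := by
    have : ((∑ A ∈ H.root, (Complex.normSq (A x)) : ℝ) : ℂ) = 0 := by
      rw [h1]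
      push_cast
      refine Finset.sum_congr rfl fun A _ => ?_
      rw [h A, Complex.mul_conj]
    exact_mod_cast this
  rw [Finset.sum_eq_zero_iff_of_nonneg (fun A _ => Complex.normSq_nonneg _)] at h2
  have h3 : ∀ A : Weight ℂ H g, A x = 0 := by
    intro A
    by_cases hA : A.IsZero
    · rw [hA.eq]; rfl
    · exact Complex.normSq_eq_zero.mp (h2 A (by simpa using hA))
  have h4 : x ∈ ⨅ α : Weight ℂ H g, α.ker := by
    rw [Submodule.mem_iInf]
    intro A
    exact h3 A
  rw [IsKilling.iInf_ker_weight_eq_bot] at h4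
  exact (Submodule.mem_bot ℂ).mp h4

theorem lie_neg_coroot {A : Weight ℂ H g} (hA : A.IsNonZero) {e y : g} (he : e ∈ R H A)
    (hy : y ∈ R H (-A)) : ∃ c : ℂ, ⁅e, y⁆ = c • (IsKilling.coroot A : g) := by
  obtain ⟨h, e0, f, t, he0m, hfm⟩ := IsKilling.exists_isSl2Triple_of_weight_isNonZero hA
  have hh := t.h_eq_coroot hA he0m hfm
  have hA' : (A : H → ℂ) ≠ 0 := hA
  obtain ⟨a, rfl⟩ := R_one hA' (x := e0) he0m t.e_ne_zero he
  obtain ⟨b, rfl⟩ := R_one (neg_ne_zero.mpr hA') (x := f) hfm t.f_ne_zero hy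
  refine ⟨a * b, ?_⟩
  rw [smul_lie, lie_smul, t.lie_e_f, hh, smul_smul]

variable (H) in
/-- Symmetric roots of `p`. -/
def Tp (p : LieSubalgebra ℂ g) (α : H → ℂ) : Prop :=
  R H α ≤ p.toSubmodule ∧ R H (-α) ≤ p.toSubmodule

variable (H) in
/-- The Levi factor, as a subspace. -/
noncomputable def leviS (p : LieSubalgebra ℂ g) : Submodule ℂ g :=
  Submodule.span ℂ {x | ∃ α : H → ℂ, Tp H p α ∧ x ∈ R H α}

theorem Tp.neg {p : LieSubalgebra ℂ g} {α : H → ℂ} (h : Tp H p α) : Tp H p (-α) :=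
  ⟨h.2, by rw [neg_neg]; exact h.1⟩

theorem Tp_zero {p : LieSubalgebra ℂ g} (hH : H ≤ p) : Tp H p 0 := by
  have : R H 0 ≤ p.toSubmodule := by rw [R_zero]; exact hH
  exact ⟨this, by rw [neg_zero]; exact this⟩

theorem R_le_levi {p : LieSubalgebra ℂ g} {α : H → ℂ} (h : Tp H p α) : R H α ≤ leviS H p :=
  fun _ hx => Submodule.subset_span ⟨α, h, hx⟩

theorem H_le_levi {p : LieSubalgebra ℂ g} (hH : H ≤ p) : H.toSubmodule ≤ leviS H p := by
  rw [← R_zero]; exact R_le_levi (Tp_zero hH)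

theorem leviS_le {p : LieSubalgebra ℂ g} : leviS H p ≤ p.toSubmodule := by
  refine Submodule.span_le.mpr ?_
  rintro x ⟨α, h, hx⟩
  exact h.1 hx

theorem Tp_add {p : LieSubalgebra ℂ g} (hH : H ≤ p) {α β : H → ℂ} (hα : Tp H p α) (hβ : Tp H p β)
    (hs : R H (α + β) ≠ ⊥) (hα1 : R H α ≠ ⊥) (hβ1 : R H β ≠ ⊥) : R H (α + β) ≤ p.toSubmodule := by
  by_cases hα0 : α = 0
  · subst hα0; rw [zero_add]; exact hβ.1
  by_cases hβ0 : β = 0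
  · subst hβ0; rw [add_zero]; exact hα.1
  by_cases h0 : α + β = 0
  · rw [h0]; exact (Tp_zero hH).1
  obtain ⟨x, hx, hx0⟩ := Submodule.exists_mem_ne_zero_of_ne_bot hα1
  obtain ⟨e, he, he0⟩ := Submodule.exists_mem_ne_zero_of_ne_bot hβ1
  have h1 := R_lie_ne hα0 hβ0 hs hx hx0 he he0
  have h2 : ⁅e, x⁆ ∈ R H (α + β) := by rw [add_comm]; exact R_lie he hx
  exact R_le_of_mem h0 h2 h1 (p.lie_mem (hβ.1 he) (hα.1 hx))

theorem leviS_lie {p : LieSubalgebra ℂ g} (hH : H ≤ p) {x y : g} (hx : x ∈ leviS H p)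
    (hy : y ∈ leviS H p) : ⁅x, y⁆ ∈ leviS H p := by
  induction hx using Submodule.span_induction with
  | zero => simp
  | add a b _ _ ha hb => rw [add_lie]; exact Submodule.add_mem _ ha hb
  | smul c a _ ha => rw [smul_lie]; exact Submodule.smul_mem _ _ ha
  | mem x hx =>
    obtain ⟨α, hα, hx⟩ := hx
    induction hy using Submodule.span_induction with
    | zero => simp
    | add a b _ _ ha hb => rw [lie_add]; exact Submodule.add_mem _ ha hb
    | smul c a _ ha => rw [lie_smul]; exact Submodule.smul_mem _ _ ha
    | mem y hy =>
      obtain ⟨β, hβ, hy⟩ := hy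
      by_cases h0 : ⁅x, y⁆ = 0
      · rw [h0]; exact Submodule.zero_mem _
      have hx0 : x ≠ 0 := by rintro rfl; simp at h0
      have hy0 : y ≠ 0 := by rintro rfl; simp at h0
      have hm : ⁅x, y⁆ ∈ R H (α + β) := R_lie hx hy
      have hα1 : R H α ≠ ⊥ := fun h => hx0 (by rw [h] at hx; simpa using hx)
      have hβ1 : R H β ≠ ⊥ := fun h => hy0 (by rw [h] at hy; simpa using hy)
      have hs : R H (α + β) ≠ ⊥ := fun h => h0 (by rw [h] at hm; simpa using hm)
      refine R_le_levi ⟨Tp_add hH hα hβ hs hα1 hβ1, ?_⟩ hm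
      rw [neg_add]
      exact Tp_add hH hα.neg hβ.neg (by rw [← neg_add]; exact R_neg_ne hs) (R_neg_ne hα1) (R_neg_ne hβ1)

theorem par_weight {p : LieSubalgebra ℂ g} (hH : H ≤ p) {α : H → ℂ} {x : g} (hxp : x ∈ p)
    (hx : x ∈ R H α) : x ∈ leviS H p ∨ x ∈ perp p.toSubmodule := by
  by_cases hx0 : x = 0
  · left; rw [hx0]; exact Submodule.zero_mem _
  by_cases hα : α = 0
  · subst hα; left; exact R_le_levi (Tp_zero hH) hx
  have h1 : R H α ≤ p.toSubmodule := R_le_of_mem hα hx hx0 hxp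
  by_cases h2 : R H (-α) ≤ p.toSubmodule
  · left; exact R_le_levi ⟨h1, h2⟩ hx
  right
  rw [mem_perp]
  have : p.toSubmodule ≤ LinearMap.ker (killingForm ℂ g x) := by
    refine Hstable_le (H := H) (fun h hh u hu => p.lie_mem (hH hh) hu) ?_
    intro β v hv hvβ
    rw [LinearMap.mem_ker]
    by_cases hab : α + β = 0
    · have : β = -α := (neg_eq_of_add_eq_zero_right hab).symm
      subst this
      by_cases hv0 : v = 0
      · rw [hv0, map_zero]
      · exact absurd (R_le_of_mem (neg_ne_zero.mpr hα) hvβ hv0 hv) h2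
    · exact R_orth hx hvβ hab
  exact fun v hv => this hv

theorem leviS_sup {b p : LieSubalgebra ℂ g} (hb : MaxSolv b) (hbp : b ≤ p) (hH : H ≤ p) :
    leviS H p ⊔ perp p.toSubmodule = p.toSubmodule := by
  apply le_antisymm
  · exact sup_le leviS_le (par_perp_le hb hbp)
  · refine Hstable_le (H := H) (fun h hh u hu => p.lie_mem (hH hh) hu) ?_
    intro α x hxp hx
    rcases par_weight hH hxp hx with h | h
    · exact Submodule.mem_sup_left h
    · exact Submodule.mem_sup_right h

theorem leviS_inf {p : LieSubalgebra ℂ g} (hH : H ≤ p) :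
    leviS H p ⊓ perp p.toSubmodule = ⊥ := by
  rw [eq_bot_iff]
  refine Hstable_le (H := H) (fun h hh u hu => ⟨leviS_lie hH (H_le_levi hH hh) hu.1,
    perp_ideal (hH hh) hu.2⟩) ?_
  intro α x hx hxα
  rw [Submodule.mem_bot]
  apply R_pair hxα
  intro y hy
  by_cases h : R H (-α) ≤ p.toSubmodule
  · exact mem_perp.mp hx.2 y (h hy)
  · have : leviS H p ≤ LinearMap.ker ((killingForm ℂ g) y) := by
      refine Submodule.span_le.mpr ?_
      rintro z ⟨β, hβ, hz⟩
      rw [SetLike.mem_coe, LinearMap.mem_ker]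
      refine R_orth hy hz ?_
      intro h0
      apply h
      rw [neg_add_eq_zero] at h0
      rw [h0]
      exact hβ.2
    rw [kill_symm]
    exact this hx.1

theorem levi_unique {b p : LieSubalgebra ℂ g} (hb : MaxSolv b) (hbp : b ≤ p) (hH : H ≤ p)
    (l : Submodule ℂ g) (hl : ∀ x ∈ l, ∀ y ∈ l, ⁅x, y⁆ ∈ l) (hHl : H.toSubmodule ≤ l)
    (hlp : l ≤ p.toSubmodule) (h1 : l ⊓ perp p.toSubmodule = ⊥)
    (h2 : l ⊔ perp p.toSubmodule = p.toSubmodule) : l = leviS H p := by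
  have hle : l ≤ leviS H p := by
    refine Hstable_le (H := H) (fun h hh u hu => hl h (hHl hh) u hu) ?_
    intro α x hx hxα
    rcases par_weight hH (hlp hx) hxα with h | h
    · exact h
    · have : x ∈ l ⊓ perp p.toSubmodule := ⟨hx, h⟩
      rw [h1] at this
      rw [(Submodule.mem_bot ℂ).mp this]
      exact Submodule.zero_mem _
  refine eq_of_le_of_inf_le_of_sup_le (z := perp p.toSubmodule) hle ?_ ?_
  · rw [leviS_inf hH]; exact bot_le
  · rw [leviS_sup hb hbp hH, h2]

/-- conjugate of `U ⊓ H` -/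
def sA (H : LieSubalgebra ℂ g) [H.IsCartanSubalgebra] (U : Submodule ℂ g) : Submodule ℂ g where
  carrier := {y | ∃ x z : H, (x : g) ∈ U ∧ (z : g) = y ∧ Conj x z}
  zero_mem' := ⟨0, 0, U.zero_mem, rfl, Conj.zero⟩
  add_mem' := by
    rintro a b ⟨x, z, hx, rfl, h⟩ ⟨x', z', hx', rfl, h'⟩
    exact ⟨x + x', z + z', U.add_mem hx hx', rfl, h.add h'⟩
  smul_mem' := by
    rintro c a ⟨x, z, hx, rfl, h⟩
    refine ⟨(starRingEnd ℂ c) • x, c • z, U.smul_mem _ hx, rfl, ?_⟩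
    have := h.smul (starRingEnd ℂ c)
    simpa using this

/-- conjugate root part -/
noncomputable def sR (H : LieSubalgebra ℂ g) [H.IsCartanSubalgebra] (U : Submodule ℂ g) :
    Submodule ℂ g :=
  Submodule.span ℂ {y | ∃ α : H → ℂ, α ≠ 0 ∧ R H α ≤ U ∧ y ∈ R H (-α)}

noncomputable def tU (H : LieSubalgebra ℂ g) [H.IsCartanSubalgebra] (U : Submodule ℂ g) :
    Submodule ℂ g := sA H U ⊔ sR H U

theorem R_le_tU {U : Submodule ℂ g} {α : H → ℂ} (hα : α ≠ 0) (h : R H α ≤ U) :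
    R H (-α) ≤ tU H U :=
  fun _ hy => Submodule.mem_sup_right (Submodule.subset_span ⟨α, hα, h, hy⟩)

theorem tU_stable {p : LieSubalgebra ℂ g} (hH : H ≤ p) {U : Submodule ℂ g}
    (hU : ∀ x ∈ leviS H p, ∀ u ∈ U, ⁅x, u⁆ ∈ U) {x u : g} (hx : x ∈ leviS H p)
    (hu : u ∈ tU H U) : ⁅x, u⁆ ∈ tU H U := by
  induction hx using Submodule.span_induction with
  | zero => simp
  | add a b _ _ ha hb => rw [add_lie]; exact Submodule.add_mem _ ha hb
  | smul c a _ ha => rw [smul_lie]; exact Submodule.smul_mem _ _ ha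
  | mem e he =>
    obtain ⟨β, hβ, he⟩ := he
    by_cases he0 : e = 0
    · rw [he0, zero_lie]; exact Submodule.zero_mem _
    obtain ⟨B, rfl⟩ := R_weight he he0
    obtain ⟨s, hs, r, hr, rfl⟩ := Submodule.mem_sup.mp hu
    rw [lie_add]
    apply Submodule.add_mem
    · obtain ⟨a, z, haU, rfl, hc⟩ := hs
      rw [← lie_skew, R_lie_H he z, hc B]
      by_cases h0 : B a = 0
      · rw [h0]; simp
      have hB : (B : H → ℂ) ≠ 0 := fun h => h0 (by rw [h]; rfl)
      have hle : R H (-B) ≤ U := by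
        intro y hy
        have h1 := hU y (R_le_levi hβ.neg hy) a haU
        rw [← lie_skew, R_lie_H hy a] at h1
        have h2 := U.smul_mem (B a)⁻¹ h1
        simpa [smul_smul, h0] using h2
      have h3 := R_le_tU (neg_ne_zero.mpr hB) hle
      rw [neg_neg] at h3
      exact Submodule.neg_mem _ (Submodule.smul_mem _ _ (h3 he))
    · clear hu
      induction hr using Submodule.span_induction with
      | zero => simp
      | add a b _ _ ha hb => rw [lie_add]; exact Submodule.add_mem _ ha hb
      | smul c a _ ha => rw [lie_smul]; exact Submodule.smul_mem _ _ ha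
      | mem y hy =>
        obtain ⟨α, hα, hαU, hy⟩ := hy
        by_cases hB : (B : H → ℂ) = 0
        · have heH : e ∈ H := by
            rw [hB, R_zero] at he; exact he
          have := R_lie_H hy ⟨e, heH⟩
          rw [show ⁅e, y⁆ = _ from this]
          exact Submodule.smul_mem _ _ (R_le_tU hα hαU hy)
        by_cases hαB : α = B
        · subst hαB
          obtain ⟨c, hc⟩ := lie_neg_coroot (A := B) hα he hy
          by_cases hc0 : c = 0
          · rw [hc, hc0, zero_smul]; exact Submodule.zero_mem _
          have h1 : ⁅y, e⁆ ∈ U := hU y (R_le_levi hβ.neg hy) e (hαU he)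
          rw [← lie_skew, hc] at h1
          have h2 := U.smul_mem (-c⁻¹) h1
          have h3 : (IsKilling.coroot B : g) ∈ U := by
            simpa [smul_smul, hc0] using h2
          rw [hc]
          exact Submodule.smul_mem _ _ (Submodule.mem_sup_left ⟨_, _, h3, rfl, conj_coroot B⟩)
        · by_cases h0 : ⁅e, y⁆ = 0
          · rw [h0]; exact Submodule.zero_mem _
          have hm : ⁅e, y⁆ ∈ R H (B + -α) := R_lie he hy
          have hn : R H (B + -α) ≠ ⊥ := fun h => h0 (by rw [h] at hm; simpa using hm)
          have hn' : R H (α + -B) ≠ ⊥ := by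
            have := R_neg_ne hn
            rwa [neg_add, neg_neg, add_comm] at this
          have hy0 : y ≠ 0 := by rintro rfl; simp at h0
          have h1 : R H (-α) ≠ ⊥ := fun h => hy0 (by rw [h] at hy; simpa using hy)
          have h2 : R H α ≠ ⊥ := by simpa using R_neg_ne h1
          have h3 : R H B ≠ ⊥ := fun h => he0 (by rw [h] at he; simpa using he)
          obtain ⟨x', hx', hx'0⟩ := Submodule.exists_mem_ne_zero_of_ne_bot h2
          obtain ⟨e', he', he'0⟩ := Submodule.exists_mem_ne_zero_of_ne_bot (R_neg_ne h3)
          have h4 := R_lie_ne hα (neg_ne_zero.mpr hB) hn' hx' hx'0 he' he'0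
          have h5 : ⁅e', x'⁆ ∈ R H (α + -B) := by rw [add_comm]; exact R_lie he' hx'
          have hne : α + -B ≠ 0 := by
            intro h; apply hαB; rwa [← sub_eq_add_neg, sub_eq_zero] at h
          have h6 : R H (α + -B) ≤ U := R_le_of_mem hne h5 h4
            (hU e' (R_le_levi hβ.neg he') x' (hαU hx'))
          have h7 := R_le_tU hne h6
          rw [neg_add, neg_neg, add_comm] at h7
          exact h7 hm

theorem perp_bot' : perp (⊥ : Submodule ℂ g) = ⊤ := by
  rw [eq_top_iff]
  intro x _
  rw [mem_perp]
  intro v hv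
  rw [(Submodule.mem_bot ℂ).mp hv, map_zero]

theorem perp_stable {l : Submodule ℂ g} {U : Submodule ℂ g}
    (hU : ∀ x ∈ l, ∀ u ∈ U, ⁅x, u⁆ ∈ U) : ∀ x ∈ l, ∀ u ∈ perp U, ⁅x, u⁆ ∈ perp U := by
  intro x hx u hu
  rw [mem_perp] at hu ⊢
  intro v hv
  rw [← lie_skew, map_neg, LinearMap.neg_apply, kill_inv, hu _ (hU x hx v hv), neg_zero]

theorem levi_reductive {p : LieSubalgebra ℂ g} (hH : H ≤ p) (U : Submodule ℂ g)
    (hU : ∀ x ∈ leviS H p, ∀ u ∈ U, ⁅x, u⁆ ∈ U) :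
    ∃ U' : Submodule ℂ g, (∀ x ∈ leviS H p, ∀ u ∈ U', ⁅x, u⁆ ∈ U') ∧ U ⊓ U' = ⊥ ∧ U ⊔ U' = ⊤ := by
  have hst : ∀ x ∈ leviS H p, ∀ u ∈ tU H U, ⁅x, u⁆ ∈ tU H U := fun x hx u hu => tU_stable hH hU hx hu
  have hHl := H_le_levi hH
  refine ⟨perp (tU H U), perp_stable hst, ?_, ?_⟩
  · rw [eq_bot_iff]
    refine Hstable_le (H := H) (fun h hh u hu => ⟨hU h (hHl hh) u hu.1,
      perp_stable hst h (hHl hh) u hu.2⟩) ?_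
    intro α x hx hxα
    rw [Submodule.mem_bot]
    by_contra hx0
    by_cases hα : α = 0
    · subst hα
      rw [R_zero] at hxα
      obtain ⟨z, hz⟩ := exists_Conj (⟨x, hxα⟩ : H)
      have h1 := mem_perp.mp hx.2 z (Submodule.mem_sup_left ⟨⟨x, hxα⟩, z, hx.1, rfl, hz⟩)
      exact hx0 (congrArg Subtype.val (conj_pos hz h1))
    · apply hx0
      apply R_pair hxα
      intro y hy
      exact mem_perp.mp hx.2 y (R_le_tU hα (R_le_of_mem hα hxα hx0 hx.1) hy)
  · have key : perp U ⊓ tU H U = ⊥ := by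
      rw [eq_bot_iff]
      refine Hstable_le (H := H) (fun h hh u hu => ⟨perp_stable hU h (hHl hh) u hu.1,
        hst h (hHl hh) u hu.2⟩) ?_
      intro γ x hx hxγ
      rw [Submodule.mem_bot]
      obtain ⟨hxU, hxt⟩ := hx
      by_cases hγ : γ = 0
      · subst hγ
        obtain ⟨s, ⟨a, z, haU, rfl, hc⟩, r, hr, rfl⟩ := Submodule.mem_sup.mp hxt
        have hz : (z : g) ∈ R H 0 := by rw [R_zero]; exact z.2
        have hr0 : r ∈ R H 0 := by
          have := Submodule.sub_mem _ hxγ hz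
          simpa using this
        have : r = 0 := by
          apply R_pair hr0
          intro y hy
          rw [neg_zero] at hy
          have : sR H U ≤ LinearMap.ker ((killingForm ℂ g) y) := by
            refine Submodule.span_le.mpr ?_
            rintro w ⟨β, hβ, -, hw⟩
            rw [SetLike.mem_coe, LinearMap.mem_ker]
            refine R_orth hy hw ?_
            rw [zero_add]; exact neg_ne_zero.mpr hβ
          rw [kill_symm]
          exact this hr
        rw [this, add_zero] at hxU ⊢
        have h1 := mem_perp.mp hxU a haU
        rw [kill_symm] at h1
        have h2 := conj_pos hc h1
        subst h2
        have h3 : Conj z 0 := by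
          intro A
          rw [hc A]
          rw [← Weight.coe_coe]
          simp
        have h4 := conj_pos h3 (by simp)
        rw [h4]; rfl
      · apply R_pair hxγ
        intro y hy
        by_cases h : R H (-γ) ≤ U
        · exact mem_perp.mp hxU y (h hy)
        · have : tU H U ≤ LinearMap.ker ((killingForm ℂ g) y) := by
            refine sup_le ?_ (Submodule.span_le.mpr ?_)
            · rintro w ⟨a, z, -, rfl, -⟩
              rw [LinearMap.mem_ker]
              have hz : (z : g) ∈ R H 0 := by rw [R_zero]; exact z.2
              exact R_orth hy hz (by rw [add_zero]; exact neg_ne_zero.mpr hγ)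
            · rintro w ⟨β, hβ, hβU, hw⟩
              rw [SetLike.mem_coe, LinearMap.mem_ker]
              refine R_orth hy hw ?_
              intro h0
              apply h
              have : β = -γ := by
                rw [← sub_eq_add_neg, sub_eq_zero] at h0
                exact h0.symm
              rw [← this]; exact hβU
          rw [kill_symm]
          exact this hxt
    have h2 : perp (U ⊔ perp (tU H U)) ≤ ⊥ := by
      rw [← key]
      refine le_inf (perp_anti le_sup_left) ?_
      conv_rhs => rw [← perp_perp (tU H U)]
      exact perp_anti le_sup_right
    rw [← perp_perp (U ⊔ perp (tU H U)), le_bot_iff.mp h2, perp_bot']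

end levi
end CPar

namespace CPar
open Module LieAlgebra LieModule
set_option linter.unusedSectionVars false
section sweep
open Topology Filter

/-- Apply the operators `E i (t i)` for `i` in the list `l`. -/
def foldP {ι W : Type*} (E : ι → ℂ → W → W) (l : List ι) (t : ι → ℂ) (v : W) : W :=
  l.foldr (fun i w => E i (t i) w) v

section normed
variable {V : Type*} [NormedAddCommGroup V] [NormedSpace ℂ V] [FiniteDimensional ℂ V]
  {ι : Type*} [Fintype ι]

theorem fold_zero (E : ι → ℂ → (V →L[ℂ] V)) (hE0 : ∀ i, E i 0 = 1) (l : List ι) (v : V) :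
    foldP (fun i s w => E i s w) l 0 v = v := by
  induction l with
  | nil => rfl
  | cons i l ih =>
    change E i 0 (foldP (fun i s w => E i s w) l 0 v) = v
    rw [ih, hE0]; rfl

theorem fold_deriv (E : ι → ℂ → (V →L[ℂ] V)) (A : ι → (V →L[ℂ] V)) (hE0 : ∀ i, E i 0 = 1)
    (hE : ∀ i, HasStrictDerivAt (E i) (A i) 0) (J : Submodule ℂ V) (h0 : J) (l : List ι) :
    HasStrictFDerivAt (fun q : (ι → ℂ) × J => foldP (fun i s w => E i s w) l q.1 (q.2 : V))
      (J.subtypeL.comp (ContinuousLinearMap.snd ℂ (ι → ℂ) J) +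
        (l.map fun i => ((ContinuousLinearMap.proj (R := ℂ) (φ := fun _ : ι => ℂ) i).comp
          (ContinuousLinearMap.fst ℂ (ι → ℂ) J)).smulRight (A i (h0 : V))).sum) (0, h0) := by
  induction l with
  | nil =>
    simp only [List.map_nil, List.sum_nil, add_zero]
    exact (J.subtypeL.comp (ContinuousLinearMap.snd ℂ (ι → ℂ) J)).hasStrictFDerivAt
  | cons i l ih =>
    have h1 : HasStrictFDerivAt (fun q : (ι → ℂ) × J => q.1 i)
        ((ContinuousLinearMap.proj (R := ℂ) (φ := fun _ : ι => ℂ) i).comp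
          (ContinuousLinearMap.fst ℂ (ι → ℂ) J)) (0, h0) :=
      ((ContinuousLinearMap.proj (R := ℂ) (φ := fun _ : ι => ℂ) i).comp
          (ContinuousLinearMap.fst ℂ (ι → ℂ) J)).hasStrictFDerivAt
    have h2 : HasStrictFDerivAt (fun q : (ι → ℂ) × J => E i (q.1 i)) _ (0, h0) :=
      HasStrictFDerivAt.comp (g := E i) (0, h0) (hE i).hasStrictFDerivAt h1
    have h3 := h2.clm_apply ih
    refine h3.congr_fderiv ?_
    apply ContinuousLinearMap.ext
    intro q
    simp [fold_zero E hE0, hE0]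
    abel

theorem sweep_normed (E : ι → ℂ → (V →L[ℂ] V)) (A : ι → (V →L[ℂ] V)) (hE0 : ∀ i, E i 0 = 1)
    (hE : ∀ i, HasStrictDerivAt (E i) (A i) 0) (J : Submodule ℂ V) (h0 : J)
    (hs : ∀ v : V, ∃ h ∈ J, ∃ t : ι → ℂ, h + ∑ i, t i • A i (h0 : V) = v) (w : V) :
    ∃ ε > 0, ∀ s : ℂ, ‖s‖ < ε → ∃ t : ι → ℂ, ∃ h ∈ J,
      (h0 : V) + s • w = foldP (fun i s w => E i s w) (Finset.univ.toList) t h := by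
  have hd := fold_deriv E A hE0 hE J h0 (Finset.univ.toList)
  have hm := hd.map_nhds_eq_of_surj (by
    rw [LinearMap.range_eq_top]
    intro v
    obtain ⟨h, hh, t, rfl⟩ := hs v
    refine ⟨(t, ⟨h, hh⟩), ?_⟩
    have : (((Finset.univ.toList (α := ι)).map fun i =>
        ((ContinuousLinearMap.proj (R := ℂ) (φ := fun _ : ι => ℂ) i).comp
          (ContinuousLinearMap.fst ℂ (ι → ℂ) J)).smulRight (A i (h0 : V))).sum)
        = ∑ i, ((ContinuousLinearMap.proj (R := ℂ) (φ := fun _ : ι => ℂ) i).comp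
          (ContinuousLinearMap.fst ℂ (ι → ℂ) J)).smulRight (A i (h0 : V)) := by
      rw [Finset.sum_map_toList]
    rw [this]
    simp)
  simp only [fold_zero E hE0] at hm
  have h1 : Set.range (fun q : (ι → ℂ) × J => foldP (fun i s w => E i s w) (Finset.univ.toList) q.1 (q.2 : V))
      ∈ 𝓝 (h0 : V) := by
    rw [← hm]
    exact range_mem_map
  have h2 : ContinuousAt (fun s : ℂ => (h0 : V) + s • w) 0 := by fun_prop
  have h3 : (fun s : ℂ => (h0 : V) + s • w) ⁻¹' _ ∈ 𝓝 (0 : ℂ) :=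
    h2.preimage_mem_nhds (by simpa using h1)
  obtain ⟨ε, hε, hb⟩ := Metric.mem_nhds_iff.mp h3
  refine ⟨ε, hε, fun s hs => ?_⟩
  obtain ⟨⟨t, h⟩, hq⟩ := hb (show s ∈ Metric.ball 0 ε by simpa using hs)
  exact ⟨t, h, h.2, hq.symm⟩

end normed

/-- Truncated exponential with parameter. -/
noncomputable def tE {W : Type*} [AddCommGroup W] [Module ℂ W] (N : ℕ) (A : Module.End ℂ W) (t : ℂ) :
    Module.End ℂ W := ∑ k ∈ Finset.range N, ((k.factorial : ℂ)⁻¹) • (t • A) ^ k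

theorem sweep {W : Type*} [AddCommGroup W] [Module ℂ W] [FiniteDimensional ℂ W] {ι : Type*} [Fintype ι]
    (N : ℕ) (hN : 2 ≤ N) (A : ι → Module.End ℂ W) (J : Submodule ℂ W) (h0 : W) (hh0 : h0 ∈ J)
    (hs : ∀ v : W, ∃ h ∈ J, ∃ t : ι → ℂ, h + ∑ i, t i • A i h0 = v) (w : W) :
    ∃ ε > 0, ∀ s : ℂ, ‖s‖ < ε → ∃ t : ι → ℂ, ∃ h ∈ J,
      h0 + s • w = foldP (fun i s w => tE N (A i) s w) (Finset.univ.toList) t h := by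
  let φ : W ≃ₗ[ℂ] (Fin (finrank ℂ W) → ℂ) := (finBasis ℂ W).equivFun
  let A' : ι → ((Fin (finrank ℂ W) → ℂ) →L[ℂ] (Fin (finrank ℂ W) → ℂ)) := fun i =>
    LinearMap.toContinuousLinearMap (φ.conj (A i))
  let E' : ι → ℂ → ((Fin (finrank ℂ W) → ℂ) →L[ℂ] (Fin (finrank ℂ W) → ℂ)) := fun i t =>
    ∑ k ∈ Finset.range N, ((k.factorial : ℂ)⁻¹) • (t ^ k) • (A' i) ^ k
  have hpow : ∀ i k v, ((A' i) ^ k) (φ v) = φ ((A i ^ k) v) := by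
    intro i k v
    induction k with
    | zero => rfl
    | succ k ih =>
      rw [pow_succ', pow_succ', mul_apply_eq_comp, ih, Module.End.mul_apply]
      simp [A', LinearEquiv.conj_apply]
  have hE : ∀ i t v, E' i t (φ v) = φ (tE N (A i) t v) := by
    intro i t v
    simp only [E', tE, FunLike.coe_sum, Finset.sum_apply,
      LinearMap.coe_sum, map_sum, smul_pow]
    refine Finset.sum_congr rfl fun k _ => ?_
    simp [hpow]
  have hE0 : ∀ i, E' i 0 = 1 := by
    intro i
    simp only [E']
    rw [Finset.sum_eq_single 0]
    · simp
    · intro k _ hk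
      rw [zero_pow hk]
      apply ContinuousLinearMap.ext
      intro v
      simp
    · intro h; exact absurd (Finset.mem_range.mpr (by omega)) h
  have hder : ∀ i, HasStrictDerivAt (E' i) (A' i) 0 := by
    intro i
    have h1 : ∀ k ∈ Finset.range N, HasStrictDerivAt
        (fun t : ℂ => ((k.factorial : ℂ)⁻¹) • (t ^ k) • (A' i) ^ k)
        (((k.factorial : ℂ)⁻¹) • ((k : ℂ) * 0 ^ (k - 1)) • (A' i) ^ k) 0 := by
      intro k _
      exact ((hasStrictDerivAt_pow k (0 : ℂ)).smul_const ((A' i) ^ k)).fun_const_smul _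
    have h2 := HasStrictDerivAt.fun_sum h1
    have h3 : ∑ k ∈ Finset.range N, ((k.factorial : ℂ)⁻¹) • ((k : ℂ) * 0 ^ (k - 1)) • (A' i) ^ k
        = A' i := by
      rw [Finset.sum_eq_single 1]
      · simp
      · intro k _ hk
        rcases Nat.lt_or_ge k 1 with h | h
        · have : k = 0 := by omega
          subst this
          apply ContinuousLinearMap.ext
          intro v
          simp
        · have : k - 1 ≠ 0 := by omega
          rw [zero_pow this, mul_zero]
          apply ContinuousLinearMap.ext
          intro v
          simp
      · intro h; exact absurd (Finset.mem_range.mpr (by omega)) h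
    rw [h3] at h2
    exact h2
  have hfold : ∀ (l : List ι) t v, foldP (fun i s w => E' i s w) l t (φ v) =
      φ (foldP (fun i s w => tE N (A i) s w) l t v) := by
    intro l t v
    induction l with
    | nil => rfl
    | cons i l ih =>
      change E' i (t i) (foldP (fun i s w => E' i s w) l t (φ v)) = φ (tE N (A i) (t i) (foldP (fun i s w => tE N (A i) s w) l t v))
      rw [ih, hE]
  obtain ⟨ε, hε, h⟩ := sweep_normed E' A' hE0 hder (J.map φ.toLinearMap) ⟨φ h0, ⟨h0, hh0, rfl⟩⟩ (by
    intro v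
    obtain ⟨h, hh, t, ht⟩ := hs (φ.symm v)
    refine ⟨φ h, ⟨h, hh, rfl⟩, t, ?_⟩
    have h4 := congrArg φ ht
    rw [LinearEquiv.apply_symm_apply, map_add, map_sum] at h4
    rw [← h4]
    congr 1
    refine Finset.sum_congr rfl fun i _ => ?_
    simpa using congrArg (fun z => t i • z) (hpow i 1 h0)) (φ w)
  refine ⟨ε, hε, fun s hs => ?_⟩
  obtain ⟨t, _, ⟨h', hh', rfl⟩, h5⟩ := h s hs
  refine ⟨t, h', hh', φ.injective ?_⟩
  rw [← hfold]
  rw [map_add, map_smul]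
  exact h5

end sweep
end CPar

namespace CPar
open Module LieAlgebra LieModule
set_option linter.unusedSectionVars false
section inner
variable (g : Type*) [LieRing g] [LieAlgebra ℂ g] [FiniteDimensional ℂ g]

/-- Truncated exponential. -/
noncomputable def expE (f : Module.End ℂ g) : Module.End ℂ g :=
  ∑ i ∈ Finset.range (finrank ℂ g + 1), ((i.factorial : ℂ)⁻¹) • f ^ i

/-- Inner automorphisms. -/
noncomputable def inn : Subgroup (g ≃ₗ[ℂ] g) :=
  Subgroup.closure {e : g ≃ₗ[ℂ] g | ∃ x : g,
    IsNilpotent (LieAlgebra.ad ℂ g x) ∧ (e : g →ₗ[ℂ] g) = expE g (LieAlgebra.ad ℂ g x)}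

variable {g}

theorem exp_auto (x : g) (hx : IsNilpotent (ad ℂ g x)) :
    ∃ e : g ≃ₗ⁅ℂ⁆ g, (e.toLinearEquiv : g →ₗ[ℂ] g) = expE g (ad ℂ g x) := by
  let m : Module ℚ g := Module.compHom g (algebraMap ℚ ℂ)
  have : IsScalarTower ℚ ℂ g := ⟨fun q c v => by
    change (q • c) • v = (algebraMap ℚ ℂ q) • c • v
    rw [Algebra.smul_def, mul_smul]⟩
  have hls : ∀ (q : ℚ) (x y : g), ⁅x, q • y⁆ = q • ⁅x, y⁆ := fun q x y => by
    change ⁅x, (algebraMap ℚ ℂ q) • y⁆ = (algebraMap ℚ ℂ q) • ⁅x, y⁆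
    exact lie_smul _ _ _
  let : LieAlgebra ℚ g := { m with lie_smul := hls }
  have had : (LieDerivation.ad ℂ g x).toLinearMap = ad ℂ g x := by
    ext v
    simp
  have h : IsNilpotent (LieDerivation.ad ℂ g x).toLinearMap := by
    rw [had]; exact hx
  refine ⟨LieDerivation.exp (LieDerivation.ad ℂ g x) h, ?_⟩
  have hf : (ad ℂ g x) ^ (finrank ℂ g + 1) = 0 := by
    have := LinearMap.charpoly_eq_X_pow_iff (ad ℂ g x) |>.mpr (by
      intro v
      obtain ⟨n, hn⟩ := hx
      exact ⟨n, by rw [hn]; rfl⟩)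
    have h2 := LinearMap.aeval_self_charpoly (ad ℂ g x)
    rw [this] at h2
    simp only [map_pow, Polynomial.aeval_X] at h2
    rw [pow_succ, h2, zero_mul]
  have h3 := IsNilpotent.exp_eq_sum hf
  refine Eq.trans ?_ (h3.trans ?_)
  · rw [← had]; rfl
  · unfold expE
    refine Finset.sum_congr rfl fun k _ => ?_
    exact inv_natCast_smul_eq ℚ ℂ _ _

theorem exp_inn (x : g) (hx : IsNilpotent (ad ℂ g x)) :
    ∃ e ∈ inn g, (e : g →ₗ[ℂ] g) = expE g (ad ℂ g x) := by
  obtain ⟨e, he⟩ := exp_auto x hx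
  exact ⟨e.toLinearEquiv, Subgroup.subset_closure ⟨x, hx, he⟩, he⟩

theorem inn_lie {e : g ≃ₗ[ℂ] g} (he : e ∈ inn g) : ∀ x y, e ⁅x, y⁆ = ⁅e x, e y⁆ := by
  induction he using Subgroup.closure_induction with
  | mem e h =>
    obtain ⟨x, hx, h⟩ := h
    obtain ⟨e', he'⟩ := exp_auto x hx
    have : ∀ v, e v = e' v := fun v => by
      have := congrArg (fun f : g →ₗ[ℂ] g => f v) (h.trans he'.symm)
      exact this
    intro a b
    rw [this, this, this]
    exact e'.map_lie a b
  | one => intro x y; rfl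
  | mul a b _ _ ha hb =>
    intro x y
    change a (b ⁅x, y⁆) = ⁅a (b x), a (b y)⁆
    rw [hb, ha]
  | inv a _ ha =>
    intro x y
    apply a.injective
    rw [ha]
    change a (a.symm _) = ⁅a (a.symm _), a (a.symm _)⁆
    simp

/-- inner automorphisms preserving `p` -/
noncomputable def GP (p : Submodule ℂ g) : Subgroup (g ≃ₗ[ℂ] g) :=
  inn g ⊓
  { carrier := {e | ∀ x, e x ∈ p ↔ x ∈ p}
    mul_mem' := fun {a b} ha hb x => (ha (b x)).trans (hb x)
    one_mem' := fun x => Iff.rfl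
    inv_mem' := fun {a} ha x => by
      rw [← ha]
      change a (a.symm x) ∈ p ↔ _
      simp }

theorem mem_GP {p : Submodule ℂ g} {e : g ≃ₗ[ℂ] g} :
    e ∈ GP p ↔ e ∈ inn g ∧ ∀ x, e x ∈ p ↔ x ∈ p := Iff.rfl

theorem exp_GP {p : LieSubalgebra ℂ g} {x : g} (hxp : x ∈ p) (hx : IsNilpotent (ad ℂ g x)) (t : ℂ) :
    ∃ e ∈ GP p.toSubmodule, ∀ v : p,
      ((tE (finrank ℂ g + 1) (ad ℂ p ⟨x, hxp⟩) t v : p) : g) = e v := by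
  have hn : IsNilpotent (ad ℂ g (t • x)) := by
    rw [map_smul]; exact hx.smul t
  obtain ⟨e, he, h⟩ := exp_inn (t • x) hn
  have key : ∀ v : p, ((tE (finrank ℂ g + 1) (ad ℂ p ⟨x, hxp⟩) t v : p) : g) = e v := by
    intro v
    have h1 : e v = expE g (ad ℂ g (t • x)) v := by rw [← h]; rfl
    rw [h1]
    unfold expE tE
    rw [LinearMap.sum_apply, LinearMap.sum_apply, AddSubmonoidClass.coe_finsetSum]
    refine Finset.sum_congr rfl fun k _ => ?_
    have h2 : ∀ k : ℕ, (((t • ad ℂ p ⟨x, hxp⟩) ^ k) v : g) = ((ad ℂ g (t • x)) ^ k) v := by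
      intro k
      induction k with
      | zero => rfl
      | succ k ih =>
        rw [pow_succ', pow_succ', Module.End.mul_apply, Module.End.mul_apply, ← ih]
        simp
    rw [LinearMap.smul_apply, LinearMap.smul_apply, ← h2]
    rfl
  refine ⟨e, ⟨he, ?_⟩, key⟩
  have hmap : p.toSubmodule.map (e : g →ₗ[ℂ] g) = p.toSubmodule := by
    apply Submodule.eq_of_le_of_finrank_le
    · rintro _ ⟨v, hv, rfl⟩
      have := key ⟨v, hv⟩
      change e v ∈ _
      rw [← this]
      exact Subtype.property _
    · rw [LinearEquiv.finrank_map_eq]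
  intro v
  constructor
  · intro hv
    rw [← hmap] at hv
    obtain ⟨w, hw, h⟩ := hv
    rwa [← e.injective h]
  · intro hv
    rw [← hmap]
    exact ⟨v, hv, rfl⟩

theorem fold_GP {p : LieSubalgebra ℂ g} {ι : Type*} (x : ι → p) (hx : ∀ i, IsNilpotent (ad ℂ g (x i : g)))
    (l : List ι) (t : ι → ℂ) : ∃ e ∈ GP p.toSubmodule, ∀ v : p,
      ((foldP (fun i s w => tE (finrank ℂ g + 1) (ad ℂ p (x i)) s w) l t v : p) : g) = e v := by
  induction l with
  | nil => exact ⟨1, one_mem _, fun v => rfl⟩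
  | cons i l ih =>
    obtain ⟨e, he, h⟩ := ih
    obtain ⟨f, hf, h'⟩ := exp_GP (x i).2 (hx i) (t i)
    refine ⟨f * e, mul_mem hf he, fun v => ?_⟩
    change _ = f (e v)
    rw [← h, ← h']
    rfl

end inner

section good
variable {g : Type*} [LieRing g] [LieAlgebra ℂ g] [FiniteDimensional ℂ g] [IsKilling ℂ g]
  {H : LieSubalgebra ℂ g} [H.IsCartanSubalgebra]

theorem H_comm {x y : g} (hx : x ∈ H) (hy : y ∈ H) : ⁅x, y⁆ = 0 := by
  have := R_lie_H (H := H) (α := 0) (x := y) (by rw [R_zero]; exact hy) ⟨x, hx⟩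
  simpa using this

theorem H_le_engel {x : g} (hx : x ∈ H) : H ≤ LieSubalgebra.engel ℂ x := by
  intro y hy
  rw [LieSubalgebra.mem_engel_iff]
  exact ⟨1, by simpa using H_comm hx hy⟩

theorem good_ne {h0 : H} (hg : LieSubalgebra.engel ℂ (h0 : g) ≤ H) {α : H → ℂ} {x : g}
    (hx : x ∈ R H α) (hx0 : x ≠ 0) (hα : α ≠ 0) : α h0 ≠ 0 := by
  intro h
  apply hα
  have hxH : x ∈ H := hg (by
    rw [LieSubalgebra.mem_engel_iff]
    exact ⟨1, by simpa [h] using R_lie_H hx h0⟩)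
  funext k
  have := R_lie_H hx k
  rw [H_comm k.2 hxH] at this
  simpa [hx0] using this.symm

theorem engel_of_good {h0 : H} (h : ∀ A : Weight ℂ H g, (A : H → ℂ) ≠ 0 → A h0 ≠ 0) :
    LieSubalgebra.engel ℂ (h0 : g) ≤ H := by
  have := Hstable_le (H := H) (U := (LieSubalgebra.engel ℂ (h0 : g)).toSubmodule) (W := H.toSubmodule)
    (fun k hk u hu => (LieSubalgebra.engel ℂ (h0 : g)).lie_mem (H_le_engel h0.2 hk) hu) (by
    intro α x hx hxα
    by_cases hx0 : x = 0
    · rw [hx0]; exact zero_mem _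
    obtain ⟨A, rfl⟩ := R_weight hxα hx0
    by_cases hA : (A : H → ℂ) = 0
    · rw [hA, R_zero] at hxα
      exact hxα
    exfalso
    have hx : x ∈ LieSubalgebra.engel ℂ (h0 : g) := hx
    rw [LieSubalgebra.mem_engel_iff] at hx
    obtain ⟨n, hn⟩ := hx
    have hp : ∀ n : ℕ, ((ad ℂ g (h0 : g)) ^ n) x = (A h0) ^ n • x := by
      intro n
      induction n with
      | zero => simp
      | succ n ih =>
        rw [pow_succ', Module.End.mul_apply, ih, map_smul, ad_apply, R_lie_H hxα, smul_smul, pow_succ]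
    rw [hp] at hn
    exact (smul_ne_zero (pow_ne_zero n (h A hA)) hx0) hn)
  exact this

theorem exists_good : ∃ h0 : H, LieSubalgebra.engel ℂ (h0 : g) ≤ H := by
  obtain ⟨h0, h⟩ := Module.Dual.exists_forall_ne_zero_of_forall_exists (K := ℂ) (M := H)
    (f := fun A : {A : Weight ℂ H g // (A : H → ℂ) ≠ 0} => A.1.toLinear) (by
      rintro ⟨A, hA⟩
      by_contra hc
      push Not at hc
      exact hA (funext hc))
  exact ⟨h0, engel_of_good fun A hA => h ⟨A, hA⟩⟩

theorem sweepP (p : LieSubalgebra ℂ g) (hH : H ≤ p) {h0 : H}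
    (hg : LieSubalgebra.engel ℂ (h0 : g) ≤ H) (w : g) (hw : w ∈ p) :
    ∃ ε > 0, ∀ s : ℂ, ‖s‖ < ε → ∃ e ∈ GP p.toSubmodule, ∃ h ∈ H, (h0 : g) + s • w = e h := by
  by_cases hN : 2 ≤ finrank ℂ g + 1
  swap
  · have : finrank ℂ g = 0 := by omega
    have := Module.finrank_zero_iff.mp this
    exact ⟨1, one_pos, fun s _ => ⟨1, one_mem _, 0, zero_mem _, Subsingleton.elim _ _⟩⟩
  let ι := {A : Weight ℂ H g // (A : H → ℂ) ≠ 0 ∧ ∃ x ∈ p, x ≠ 0 ∧ x ∈ R H A}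
  have : Fintype ι := Fintype.ofFinite ι
  let x : ι → p := fun A => ⟨A.2.2.choose, A.2.2.choose_spec.1⟩
  have hx0 : ∀ i, (x i : g) ≠ 0 := fun i => i.2.2.choose_spec.2.1
  have hxR : ∀ i, (x i : g) ∈ R H i.1 := fun i => i.2.2.choose_spec.2.2
  let J : Submodule ℂ p := H.toSubmodule.comap p.toSubmodule.subtype
  let B : (ι → ℂ) →ₗ[ℂ] g := ∑ i, (LinearMap.proj (R := ℂ) (φ := fun _ : ι => ℂ) i).smulRight ⁅(x i : g), (h0 : g)⁆
  have hB : ∀ t, B t = ∑ i, t i • ⁅(x i : g), (h0 : g)⁆ := by intro t; simp [B]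
  have hle : p.toSubmodule ≤ H.toSubmodule ⊔ LinearMap.range B := by
    apply Hstable_le (H := H) (fun k hk u hu => p.lie_mem (hH hk) hu)
    intro α y hy hyα
    by_cases hy0 : y = 0
    · rw [hy0]; exact zero_mem _
    obtain ⟨A, rfl⟩ := R_weight hyα hy0
    by_cases hA : (A : H → ℂ) = 0
    · rw [hA, R_zero] at hyα
      exact Submodule.mem_sup_left hyα
    apply Submodule.mem_sup_right
    classical
    let i : ι := ⟨A, hA, y, hy, hy0, hyα⟩
    obtain ⟨c, hc⟩ := R_one hA (hxR i) (hx0 i) hyα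
    have hne : A h0 ≠ 0 := good_ne hg hyα hy0 hA
    refine ⟨Pi.single i (-(A h0)⁻¹ * c), ?_⟩
    rw [hB, Finset.sum_eq_single i]
    · rw [Pi.single_eq_same, ← lie_skew, R_lie_H (hxR i) h0, ← hc]
      change _ • -(A h0 • (x i : g)) = _
      rw [smul_neg, smul_smul, ← neg_smul]
      congr 1
      field_simp
    · intro j _ hj
      rw [Pi.single_eq_of_ne hj, zero_smul]
    · intro h; exact absurd (Finset.mem_univ _) h
  obtain ⟨ε, hε, h⟩ := sweep (finrank ℂ g + 1) hN (fun i => ad ℂ p (x i)) J ⟨h0, hH h0.2⟩ h0.2 (by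
    intro v
    obtain ⟨h, hh, _, ⟨t, rfl⟩, hv⟩ := Submodule.mem_sup.mp (hle v.2)
    refine ⟨⟨h, hH hh⟩, hh, t, ?_⟩
    apply Subtype.ext
    rw [← hv, hB]
    simp) ⟨w, hw⟩
  refine ⟨ε, hε, fun s hs => ?_⟩
  obtain ⟨t, h, hh, heq⟩ := h s hs
  obtain ⟨e, he, hfe⟩ := fold_GP x (fun i => R_nilp i.2.1 (hxR i)) Finset.univ.toList t
  refine ⟨e, he, h, hh, ?_⟩
  rw [← hfe, ← heq]
  rfl
end good
end CPar

namespace CPar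
open Module LieAlgebra LieModule
set_option linter.unusedSectionVars false
section conj
open Topology Filter LieSubalgebra
variable {g : Type*} [LieRing g] [LieAlgebra ℂ g] [FiniteDimensional ℂ g]

theorem inn_engel {e : g ≃ₗ[ℂ] g} (he : e ∈ inn g) (x z : g) :
    e z ∈ engel ℂ (e x) ↔ z ∈ engel ℂ x := by
  have h : ∀ n : ℕ, ((ad ℂ g (e x)) ^ n) (e z) = e (((ad ℂ g x) ^ n) z) := by
    intro n
    induction n with
    | zero => rfl
    | succ n ih =>
      rw [pow_succ', pow_succ', Module.End.mul_apply, Module.End.mul_apply, ih, ad_apply, ad_apply,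
        inn_lie he]
  rw [mem_engel_iff, mem_engel_iff]
  simp only [h, LinearEquiv.map_eq_zero_iff]

theorem inn_engel_map {e : g ≃ₗ[ℂ] g} (he : e ∈ inn g) (x : g) :
    (engel ℂ x).toSubmodule.map (e : g →ₗ[ℂ] g) = (engel ℂ (e x)).toSubmodule := by
  ext z
  constructor
  · rintro ⟨w, hw, rfl⟩
    exact (inn_engel he x w).mpr hw
  · intro hz
    refine ⟨e.symm z, (inn_engel he x _).mp ?_, by simp⟩
    simpa using hz

theorem inn_finrank {e : g ≃ₗ[ℂ] g} (he : e ∈ inn g) (x : g) :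
    finrank ℂ (engel ℂ (e x)) = finrank ℂ (engel ℂ x) := by
  have := LinearEquiv.finrank_map_eq e (engel ℂ x).toSubmodule
  rw [inn_engel_map he] at this
  exact this

theorem inn_regular {e : g ≃ₗ[ℂ] g} (he : e ∈ inn g) (x : g) :
    IsRegular ℂ (e x) ↔ IsRegular ℂ x := by
  rw [isRegular_iff_finrank_engel_eq_rank, isRegular_iff_finrank_engel_eq_rank, inn_finrank he]

section regp
attribute [local instance] LieRing.ofAssociativeRing

theorem regPoly (x y : g) : ∃ q : Polynomial ℂ, ∀ s : ℂ, IsRegular ℂ (x + s • y) ↔ q.eval s ≠ 0 := by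
  let b := Module.Free.chooseBasis ℂ g
  classical
  refine ⟨MvPolynomial.aeval (fun i => Polynomial.C (b.repr y i) * Polynomial.X + Polynomial.C (b.repr x i))
    ((LinearMap.polyCharpoly (ad ℂ g).toLinearMap b).coeff (LieAlgebra.rank ℂ g)), fun s => ?_⟩
  rw [LieAlgebra.isRegular_iff_coeff_polyCharpoly_rank_ne_zero ℂ b]
  have aux : (fun i ↦ (b.repr y) i * s + (b.repr x) i) = b.repr (x + s • y) := by
    ext i; simp [mul_comm s, add_comm]
  rw [← aux, ← Polynomial.coe_aeval_eq_eval, ← AlgHom.comp_apply, MvPolynomial.comp_aeval]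
  simp

end regp

theorem engel_cartan {x : g} (hx : IsRegular ℂ x) : (engel ℂ x).IsCartanSubalgebra := by
  refine ⟨?_, normalizer_engel _ _⟩
  apply isNilpotent_of_forall_le_engel
  intro y hy
  set Ex : {engel ℂ z | z ∈ engel ℂ x} := ⟨engel ℂ x, x, self_mem_engel _ _, rfl⟩
  suffices IsBot Ex from @this ⟨engel ℂ y, y, hy, rfl⟩
  apply engel_isBot_of_isMin (Cardinal.natCast_le_aleph0.trans <| Cardinal.infinite_iff.mp inferInstance)
    (engel ℂ x) Ex le_rfl
  rintro ⟨_, y, hy, rfl⟩ hyx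
  suffices finrank ℂ (engel ℂ x) ≤ finrank ℂ (engel ℂ y) by
    suffices engel ℂ y = engel ℂ x from this.ge
    apply LieSubalgebra.toSubmodule_injective
    exact Submodule.eq_of_le_of_finrank_le hyx this
  rw [(isRegular_iff_finrank_engel_eq_rank ℂ x).mp hx]
  apply rank_le_finrank_engel

variable [IsKilling ℂ g]

theorem good_regular {H : LieSubalgebra ℂ g} [H.IsCartanSubalgebra] {h0 : H}
    (hg : engel ℂ (h0 : g) ≤ H) : IsRegular ℂ (h0 : g) := by
  obtain ⟨Y, hY⟩ := LieAlgebra.exists_isRegular ℂ g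
  obtain ⟨q, hq⟩ := regPoly (h0 : g) (Y - h0)
  have hq0 : q ≠ 0 := by
    rintro rfl
    have := (hq 1).mp (by simpa using hY)
    simp at this
  obtain ⟨ε, hε, h⟩ := sweepP (H := H) ⊤ le_top hg (Y - h0) trivial
  have hs : ∃ s : ℂ, ‖s‖ < ε ∧ q.eval s ≠ 0 := by
    by_contra hc
    push Not at hc
    apply hq0
    apply Polynomial.eq_zero_of_infinite_isRoot
    refine Set.Infinite.mono (s := Metric.ball (0 : ℂ) ε) (fun s hs => hc s (by simpa using hs)) ?_
    exact infinite_of_mem_nhds (0 : ℂ) (Metric.ball_mem_nhds 0 hε)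
  obtain ⟨s, hs, hqs⟩ := hs
  obtain ⟨e, he, k, hk, heq⟩ := h s hs
  have hr := (hq s).mpr hqs
  rw [heq, inn_regular he.1, isRegular_iff_finrank_engel_eq_rank] at hr
  rw [isRegular_iff_finrank_engel_eq_rank]
  apply le_antisymm _ (rank_le_finrank_engel ℂ _)
  rw [← hr]
  exact Submodule.finrank_mono (s := (engel ℂ (h0 : g)).toSubmodule) (t := (engel ℂ k).toSubmodule)
    (fun z hz => H_le_engel hk (hg hz))

theorem engel_le_par {b p : LieSubalgebra ℂ g} (hb : MaxSolv b) (hbp : b ≤ p) {x : g} (hxp : x ∈ p)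
    (hx : IsRegular ℂ x) : engel ℂ x ≤ p := by
  have hc := engel_cartan hx
  let f : perp p.toSubmodule →ₗ[ℂ] perp p.toSubmodule :=
    (ad ℂ g x).restrict (fun y hy => perp_ideal hxp hy)
  have hf : Function.Injective f := by
    rw [injective_iff_map_eq_zero]
    intro y hy
    have hy : ⁅x, (y : g)⁆ = 0 := congrArg Subtype.val hy
    apply Subtype.ext
    refine IsKilling.eq_zero_of_isNilpotent_ad_of_mem_isCartanSubalgebra ℂ g (engel ℂ x) ?_ (par_nilp hb hbp y.2)
    rw [mem_engel_iff]
    exact ⟨1, by simpa using hy⟩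
  have hs := LinearMap.injective_iff_surjective.mp hf
  intro z hz
  have : z ∈ perp (perp p.toSubmodule) := by
    refine mem_perp.mpr fun y hy => ?_
    obtain ⟨y', hy'⟩ := hs ⟨y, hy⟩
    have hy' : ⁅x, (y' : g)⁆ = y := congrArg Subtype.val hy'
    rw [← hy', ← kill_inv, H_comm hz (self_mem_engel ℂ x)]
    simp
  rwa [perp_perp] at this

theorem conj_cartan {b p : LieSubalgebra ℂ g} (hb : MaxSolv b) (hbp : b ≤ p)
    {H H' : LieSubalgebra ℂ g} [H.IsCartanSubalgebra] [H'.IsCartanSubalgebra] (hH : H ≤ p) (hH' : H' ≤ p) :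
    ∃ e ∈ GP p.toSubmodule, ∀ z, e z ∈ H' ↔ z ∈ H := by
  obtain ⟨h0, hg⟩ := exists_good (H := H)
  obtain ⟨h1, hg'⟩ := exists_good (H := H')
  have e0 : engel ℂ (h0 : g) = H := le_antisymm hg (H_le_engel h0.2)
  have e1 : engel ℂ (h1 : g) = H' := le_antisymm hg' (H_le_engel h1.2)
  let w : g := h1 - h0
  have hw : w ∈ p := sub_mem (hH' h1.2) (hH h0.2)
  let X : ℂ → g := fun s => (h0 : g) + s • w
  have hX : ∀ s, X s ∈ p := fun s => add_mem (hH h0.2) (p.smul_mem s hw)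
  obtain ⟨q, hq⟩ := regPoly (h0 : g) w
  have hX0 : X 0 = h0 := by simp [X]
  have hX1 : X 1 = h1 := by simp [X, w]
  have hq0 : q.eval 0 ≠ 0 := (hq 0).mp (by change IsRegular ℂ (X 0); rw [hX0]; exact good_regular hg)
  have hq1 : q.eval 1 ≠ 0 := (hq 1).mp (by change IsRegular ℂ (X 1); rw [hX1]; exact good_regular hg')
  have hqne : q ≠ 0 := by rintro rfl; simp at hq0
  have hfin : {s : ℂ | q.eval s = 0}.Countable := (Polynomial.finite_setOfPred_isRoot hqne).countable
  have hconn := hfin.isConnected_compl_of_one_lt_rank (by simp)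
  have key := hconn.isPreconnected.induction₂
    (fun s s' => ∃ e ∈ GP p.toSubmodule, ∀ z, e z ∈ engel ℂ (X s') ↔ z ∈ engel ℂ (X s)) (by
      intro s hs
      have hr : IsRegular ℂ (X s) := (hq s).mpr hs
      have hc := engel_cartan hr
      have hep := engel_le_par hb hbp (hX s) hr
      obtain ⟨ε, hε, h⟩ := sweepP (H := engel ℂ (X s)) p hep (h0 := ⟨X s, self_mem_engel ℂ _⟩) le_rfl w hw
      have h1 : ∀ᶠ s' in 𝓝[{s : ℂ | q.eval s = 0}ᶜ] s, s' ∈ Metric.ball s ε :=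
        mem_nhdsWithin_of_mem_nhds (Metric.ball_mem_nhds s hε)
      filter_upwards [h1, self_mem_nhdsWithin] with s' hs' hs'r
      obtain ⟨e, he, k, hk, heq⟩ := h (s' - s) (by simpa [dist_eq_norm] using hs')
      have heq : X s' = e k := by
        rw [← heq]
        simp only [X, sub_smul]
        abel
      have hr' : IsRegular ℂ (X s') := (hq s').mpr hs'r
      rw [heq, inn_regular he.1, isRegular_iff_finrank_engel_eq_rank] at hr'
      rw [isRegular_iff_finrank_engel_eq_rank] at hr
      have hEq : (engel ℂ (X s)).toSubmodule = (engel ℂ k).toSubmodule :=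
        Submodule.eq_of_le_of_finrank_eq (H_le_engel hk) (hr.trans hr'.symm)
      refine ⟨e, he, fun z => ?_⟩
      rw [heq, inn_engel he.1]
      change z ∈ (engel ℂ k).toSubmodule ↔ z ∈ (engel ℂ (X s)).toSubmodule
      rw [hEq]) (by
      rintro x y z _ _ _ ⟨e, he, h⟩ ⟨f, hf, h'⟩
      exact ⟨f * e, mul_mem hf he, fun v => (h' (e v)).trans (h v)⟩) (by
      rintro x y _ _ ⟨e, he, h⟩
      refine ⟨e⁻¹, inv_mem he, fun v => ?_⟩
      rw [← h]
      change e (e.symm v) ∈ _ ↔ _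
      simp) hq0 hq1
  obtain ⟨e, he, h⟩ := key
  rw [hX0, hX1, e0, e1] at h
  exact ⟨e, he, h⟩

theorem GP_perp {p : Submodule ℂ g} {e : g ≃ₗ[ℂ] g} (he : e ∈ GP p) (z : g) : e z ∈ perp p ↔ z ∈ perp p := by
  let E : g ≃ₗ⁅ℂ⁆ g := { e with map_lie' := fun {x y} => inn_lie he.1 x y }
  have hk : ∀ x y, killingForm ℂ g (e x) (e y) = killingForm ℂ g x y := fun x y =>
    LieAlgebra.killingForm_of_equiv_apply E x y
  rw [mem_perp, mem_perp]
  constructor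
  · intro h v hv
    rw [← hk]
    exact h _ ((he.2 v).mpr hv)
  · intro h v hv
    have := h (e.symm v) ((he.2 _).mp (by simpa using hv))
    rw [← hk] at this
    simpa using this

theorem conj_levi {b p : LieSubalgebra ℂ g} (hb : MaxSolv b) (hbp : b ≤ p)
    {H H' : LieSubalgebra ℂ g} [H.IsCartanSubalgebra] [H'.IsCartanSubalgebra] (hH : H ≤ p) (hH' : H' ≤ p)
    {e : g ≃ₗ[ℂ] g} (he : e ∈ GP p.toSubmodule) (h : ∀ z, e z ∈ H' ↔ z ∈ H) :
    (leviS H p).map (e : g →ₗ[ℂ] g) = leviS H' p := by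
  have hpm : ∀ q : Submodule ℂ g, (∀ z, e z ∈ q ↔ z ∈ q) → q.map (e : g →ₗ[ℂ] g) = q := by
    intro q hq
    ext z
    constructor
    · rintro ⟨w, hw, rfl⟩
      exact (hq w).mpr hw
    · intro hz
      exact ⟨e.symm z, (hq _).mp (by simpa using hz), by simp⟩
  have hpp := hpm _ (GP_perp he)
  have hp := hpm _ he.2
  apply levi_unique hb hbp hH'
  · rintro _ ⟨x, hx, rfl⟩ _ ⟨y, hy, rfl⟩
    exact ⟨⁅x, y⁆, leviS_lie hH hx hy, inn_lie he.1 x y⟩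
  · intro z hz
    exact ⟨e.symm z, H_le_levi hH ((h _).mp (by simpa using hz)), by simp⟩
  · rw [← hp]
    exact Submodule.map_mono leviS_le
  · conv_lhs => rw [← hpp]
    rw [← Submodule.map_inf _ e.injective, leviS_inf hH, Submodule.map_bot]
  · conv_lhs => rw [← hpp]
    rw [← Submodule.map_sup, leviS_sup hb hbp hH, hp]
end conj
end CPar

namespace ManinPaper

section bridge
set_option linter.unusedSectionVars false
variable {g : Type*} [LieRing g] [LieAlgebra ℝ g] [LieAlgebra ℂ g] [IsScalarTower ℝ ℂ g]
  [FiniteDimensional ℂ g] [FiniteDimensional ℝ g]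
open LieAlgebra LieModule

/-- The Lie subalgebra attached to a subspace closed under brackets. -/
def toSub (V : Submodule ℂ g) (h : IsSub g V) : LieSubalgebra ℂ g :=
  { V with lie_mem' := fun {x y} hx hy => h x hx y hy }

theorem map_bracket (s : LieSubalgebra ℂ g) (I J : LieIdeal ℂ s) :
    (LieSubmodule.toSubmodule ⁅I, J⁆).map s.toSubmodule.subtype =
      bracketSpan g ((LieSubmodule.toSubmodule I).map s.toSubmodule.subtype)
        ((LieSubmodule.toSubmodule J).map s.toSubmodule.subtype) := by
  rw [LieSubmodule.lieIdeal_oper_eq_linear_span', Submodule.map_span]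
  unfold bracketSpan
  congr 1
  ext z
  constructor
  · rintro ⟨_, ⟨x, hx, y, hy, rfl⟩, rfl⟩
    exact ⟨x, ⟨x, hx, rfl⟩, y, ⟨y, hy, rfl⟩, rfl⟩
  · rintro ⟨_, ⟨x, hx, rfl⟩, _, ⟨y, hy, rfl⟩, rfl⟩
    let x' : s := x
    let y' : s := y
    exact ⟨⁅x', y'⁆, ⟨x', hx, y', hy, rfl⟩, rfl⟩

theorem map_top_sub (s : LieSubalgebra ℂ g) :
    (LieSubmodule.toSubmodule (⊤ : LieIdeal ℂ s)).map s.toSubmodule.subtype = s.toSubmodule := by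
  ext z
  constructor
  · rintro ⟨x, _, rfl⟩
    exact x.2
  · intro hz
    exact ⟨⟨z, hz⟩, trivial, rfl⟩

theorem map_bot_iff (s : LieSubalgebra ℂ g) (I : LieIdeal ℂ s) :
    (LieSubmodule.toSubmodule I).map s.toSubmodule.subtype = ⊥ ↔ I = ⊥ := by
  constructor
  · intro h
    rw [LieSubmodule.eq_bot_iff]
    intro x hx
    have h1 : (x : g) ∈ (LieSubmodule.toSubmodule I).map s.toSubmodule.subtype := ⟨x, hx, rfl⟩
    rw [h] at h1
    exact Subtype.ext h1
  · rintro rfl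
    simp

theorem solv_iff (s : LieSubalgebra ℂ g) : SolvableSub g s.toSubmodule ↔ IsSolvable s := by
  have h : ∀ k, derivedSub g s.toSubmodule k =
      (LieSubmodule.toSubmodule (derivedSeries ℂ s k)).map s.toSubmodule.subtype := by
    intro k
    induction k with
    | zero => exact (map_top_sub s).symm
    | succ k ih =>
      change bracketSpan g (derivedSub g s.toSubmodule k) (derivedSub g s.toSubmodule k) = _
      rw [ih, ← map_bracket]
      rw [show derivedSeries ℂ s (k + 1) = ⁅derivedSeries ℂ s k, derivedSeries ℂ s k⁆ from
        derivedSeriesOfIdeal_succ ℂ s ⊤ k]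
  rw [LieAlgebra.isSolvable_iff ℂ s]
  unfold SolvableSub
  simp only [h, map_bot_iff]

theorem nilp_iff (s : LieSubalgebra ℂ g) : NilpotentSub g s.toSubmodule ↔ LieRing.IsNilpotent s := by
  have h : ∀ k, lcsSub g s.toSubmodule k =
      (LieSubmodule.toSubmodule (lowerCentralSeries ℂ s s k)).map s.toSubmodule.subtype := by
    intro k
    induction k with
    | zero => exact (map_top_sub s).symm
    | succ k ih =>
      change bracketSpan g s.toSubmodule (lcsSub g s.toSubmodule k) = _
      rw [ih]
      refine Eq.trans ?_ ((map_bracket s ⊤ (lowerCentralSeries ℂ s s k)).symm.trans ?_)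
      · rw [map_top_sub]
      · rw [lowerCentralSeries_succ]
  refine Iff.trans ?_ (LieModule.isNilpotent_iff ℂ s s).symm
  unfold NilpotentSub
  simp only [h, map_bot_iff]

theorem cartanIn_of {p : LieSubalgebra ℂ g} {j : Submodule ℂ g} (h : IsCartanIn g p.toSubmodule j) :
    CPar.CartanIn p (toSub j h.1) :=
  ⟨h.2.1, (nilp_iff (toSub j h.1)).mp h.2.2.1, h.2.2.2⟩

theorem cartan_top {s : LieSubalgebra ℂ g} (h : s.IsCartanSubalgebra) : IsCartanIn g ⊤ s.toSubmodule := by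
  refine ⟨fun x hx y hy => s.lie_mem hx hy, le_top, (nilp_iff s).mpr h.nilpotent, fun x _ hx => ?_⟩
  have : x ∈ s.normalizer := s.mem_normalizer_iff x |>.mpr fun y hy => hx y hy
  rwa [h.self_normalizing] at this

theorem cartan_of_top {j : Submodule ℂ g} (h : IsCartanIn g ⊤ j) : (toSub j h.1).IsCartanSubalgebra := by
  refine ⟨(nilp_iff (toSub j h.1)).mp h.2.2.1, le_antisymm ?_ (LieSubalgebra.le_normalizer _)⟩
  intro x hx
  exact h.2.2.2 x trivial fun y hy => (LieSubalgebra.mem_normalizer_iff _ x).mp hx y hy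

theorem maxSolv_of {b : Submodule ℂ g} (h : IsBorelIn g ⊤ b) : CPar.MaxSolv (toSub b h.1) := by
  refine ⟨(solv_iff (toSub b h.1)).mp h.2.2.1, fun b' hb' hle => ?_⟩
  have := h.2.2.2 b'.toSubmodule (fun x hx y hy => b'.lie_mem hx hy) le_top ((solv_iff b').mpr hb') hle
  exact this.le

variable [IsKilling ℂ g]

theorem nilrad_eq {b p : LieSubalgebra ℂ g} (hb : CPar.MaxSolv b) (hbp : b ≤ p) :
    nilpotentRadIn g p.toSubmodule = CPar.perp p.toSubmodule := by
  have hrad : radicalIn g p.toSubmodule = (CPar.zMod p).toSubmodule := by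
    apply le_antisymm
    · apply sSup_le
      rintro J ⟨hJ, hs⟩
      let J' := toSub J (fun x hx y hy => hJ.2 x (hJ.1 hx) y hy)
      have : IsSolvable J' := (solv_iff J').mp hs
      exact CPar.solv_ideal_le hb hbp J' hJ.1 hJ.2
    · apply le_sSup
      refine ⟨⟨fun x hx => hx.1, fun x hx y hy => ?_⟩, (solv_iff _).mpr (CPar.zMod_solvable hb hbp)⟩
      have h1 : ⁅x, y⁆ ∈ CPar.perp p.toSubmodule := by
        rw [← lie_skew]
        exact Submodule.neg_mem _ (hy.2 x hx)
      exact ⟨p.lie_mem hx hy.1, fun w hw => CPar.perp_ideal' hw h1⟩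
  unfold nilpotentRadIn
  rw [hrad]
  apply le_antisymm
  · rintro x ⟨h1, h2⟩
    exact CPar.zMod_inf_derived hb hbp h2 h1
  · intro x hx
    exact ⟨CPar.par_perp_le_derived hb hbp hx, CPar.par_perp_le hb hbp hx, fun y hy => CPar.perp_ideal' hy hx⟩

theorem langlands_levi {b p : LieSubalgebra ℂ g} (hb : CPar.MaxSolv b) (hbp : b ≤ p)
    {H : LieSubalgebra ℂ g} [H.IsCartanSubalgebra] (hH : H ≤ p) :
    IsLanglandsIn g ⊤ p.toSubmodule (CPar.leviS H p) := by
  refine ⟨fun x hx y hy => CPar.leviS_lie hH hx hy, CPar.leviS_le, ?_, ?_, ?_⟩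
  · intro U _ hU
    obtain ⟨U', h1, h2, h3⟩ := CPar.levi_reductive hH U hU
    exact ⟨U', le_top, h1, h2, h3⟩
  · rw [nilrad_eq hb hbp]; exact CPar.leviS_inf hH
  · rw [nilrad_eq hb hbp]; exact CPar.leviS_sup hb hbp hH

theorem langlands_unique {b p : LieSubalgebra ℂ g} (hb : CPar.MaxSolv b) (hbp : b ≤ p)
    {H : LieSubalgebra ℂ g} [H.IsCartanSubalgebra] (hH : H ≤ p) {l : Submodule ℂ g}
    (hl : IsLanglandsIn g ⊤ p.toSubmodule l) (hHl : H.toSubmodule ≤ l) : l = CPar.leviS H p := by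
  obtain ⟨h1, h2, _, h3, h4⟩ := hl
  rw [nilrad_eq hb hbp] at h3 h4
  exact CPar.levi_unique hb hbp hH l h1 hHl h2 h3 h4

end bridge

variable (g : Type*) [LieRing g] [LieAlgebra ℝ g] [LieAlgebra ℂ g] [IsScalarTower ℝ ℂ g]
  [FiniteDimensional ℂ g] [FiniteDimensional ℝ g]

/-- Lemma 3 of Delorme.
Let `p` be a parabolic subalgebra of a finite-dimensional complex semisimple Lie algebra
`g`, with nilpotent radical `n`.
(i) Every Cartan subalgebra `j` of `p` is a Cartan subalgebra of `g`, and there is a unique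
Langlands decomposition `p = l ⊕ n` with `j ⊆ l`.
(ii) Any two Cartan subalgebras of `g` contained in `p` are conjugate by an element of the
analytic subgroup `P` (an inner automorphism of `g` preserving `p`, since `P` is the
normalizer of `p` in `G`), which conjugates the corresponding `l` and `l'`.
(iii) For any Langlands decomposition `p = l ⊕ n`, every Cartan subalgebra of `l` is a
Cartan subalgebra of `g`. -/
theorem cartan_subalgebras_of_parabolic
    (g : Type*) [LieRing g] [LieAlgebra ℝ g] [LieAlgebra ℂ g] [IsScalarTower ℝ ℂ g]
    [FiniteDimensional ℂ g] [FiniteDimensional ℝ g] [LieAlgebra.IsSemisimple ℂ g]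
    (p : Submodule ℂ g) (hp : IsParabolicIn g ⊤ p) :
    -- (i)
    (∀ j : Submodule ℂ g, IsCartanIn g p j →
      IsCartanIn g ⊤ j ∧
      ∃ l : Submodule ℂ g, (IsLanglandsIn g ⊤ p l ∧ j ≤ l) ∧
        ∀ l' : Submodule ℂ g, IsLanglandsIn g ⊤ p l' → j ≤ l' → l' = l) ∧
    -- (ii)
    (∀ j j' : Submodule ℂ g, IsCartanIn g ⊤ j → j ≤ p → IsCartanIn g ⊤ j' → j' ≤ p →
      ∀ l l' : Submodule ℂ g,
        IsLanglandsIn g ⊤ p l → j ≤ l → IsLanglandsIn g ⊤ p l' → j' ≤ l' →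
        ∃ e ∈ innerAut g, (⇑e '' (p : Set g) = (p : Set g)) ∧
          (⇑e '' (j : Set g) = (j' : Set g)) ∧ (⇑e '' (l : Set g) = (l' : Set g))) ∧
    -- (iii)
    (∀ l : Submodule ℂ g, IsLanglandsIn g ⊤ p l →
      ∀ j : Submodule ℂ g, IsCartanIn g l j → IsCartanIn g ⊤ j) := by
  have hK : LieAlgebra.IsKilling ℂ g := inferInstance
  obtain ⟨hps, -, b, hbB, hbp⟩ := hp
  let P : LieSubalgebra ℂ g := toSub p hps
  have hb := maxSolv_of hbB
  have hbP : toSub b hbB.1 ≤ P := hbp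
  refine ⟨?_, ?_, ?_⟩
  · intro j hj
    have hc : (toSub j hj.1).IsCartanSubalgebra := CPar.cartan_of_par hb hbP (cartanIn_of (p := P) hj)
    have hjP : toSub j hj.1 ≤ P := hj.2.1
    refine ⟨cartan_top hc, CPar.leviS (toSub j hj.1) P,
      ⟨langlands_levi hb hbP hjP, CPar.H_le_levi hjP⟩, fun l' hl' hjl' => ?_⟩
    exact langlands_unique hb hbP hjP hl' hjl'
  · intro j j' hj hjp hj' hjp' l l' hl hjl hl' hjl'
    have hc := cartan_of_top hj
    have hc' := cartan_of_top hj'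
    have hjP : toSub j hj.1 ≤ P := hjp
    have hjP' : toSub j' hj'.1 ≤ P := hjp'
    obtain ⟨e, he, h⟩ := CPar.conj_cartan hb hbP hjP hjP'
    have hle := CPar.conj_levi hb hbP hjP hjP' he h
    rw [← langlands_unique hb hbP hjP hl hjl, ← langlands_unique hb hbP hjP' hl' hjl'] at hle
    have himg : ∀ A B : Set g, (∀ z, e z ∈ B ↔ z ∈ A) → ⇑e '' A = B := by
      intro A B hAB
      ext z
      constructor
      · rintro ⟨w, hw, rfl⟩
        exact (hAB w).mpr hw
      · intro hz
        exact ⟨e.symm z, (hAB _).mp (by simpa using hz), by simp⟩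
    refine ⟨e, he.1, himg _ _ he.2, himg _ _ h, ?_⟩
    rw [← hle]
    rfl
  · intro l hl j hj
    obtain ⟨h1, h2, _, h3, h4⟩ := hl
    have hnil := nilrad_eq hb hbP
    rw [show nilpotentRadIn g p = _ from hnil] at h3 h4
    have hj' := cartanIn_of (p := toSub l h1) hj
    exact cartan_top (CPar.cartan_of_levi hb hbP (l := toSub l h1) h2 h3 h4 hj')

end ManinPaper
end

section
/- Let g be a finite-dimensional complex reductive Lie algebra, B a real (resp. complex) Manin form on g, and i a real (resp. complex) Lie subalgebra of g that is Lagrangian for B. Let r be the radical of i and set n := { X ∈ r ∩ g^der : ad_g X is nilpotent }. Then n is an ideal of i and [i, r] ⊆ n. -/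
open Module

namespace ManinPaper

variable (g : Type*) [LieRing g] [LieAlgebra ℝ g] [LieAlgebra ℂ g] [IsScalarTower ℝ ℂ g]
  [FiniteDimensional ℂ g] [FiniteDimensional ℝ g]

/-! ### Bilinear forms, signature, Manin forms -/

/-- Invariance of an `ℝ`-bilinear form. -/
def RInvariant (B : g →ₗ[ℝ] g →ₗ[ℝ] ℝ) : Prop :=
  ∀ Z X Y : g, B ⁅Z, X⁆ Y + B X ⁅Z, Y⁆ = 0

def RSymm (B : g →ₗ[ℝ] g →ₗ[ℝ] ℝ) : Prop := ∀ X Y : g, B X Y = B Y X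

def CInvariant (B : g →ₗ[ℂ] g →ₗ[ℂ] ℂ) : Prop :=
  ∀ Z X Y : g, B ⁅Z, X⁆ Y + B X ⁅Z, Y⁆ = 0

def CSymm (B : g →ₗ[ℂ] g →ₗ[ℂ] ℂ) : Prop := ∀ X Y : g, B X Y = B Y X

/-- Nondegeneracy of the restriction of a complex bilinear form to the subspace `W`. -/
def CNondegOn (B : g →ₗ[ℂ] g →ₗ[ℂ] ℂ) (W : Set g) : Prop :=
  ∀ x ∈ W, (∀ y ∈ W, B x y = 0) → x = 0

def RNondegOn (B : g →ₗ[ℝ] g →ₗ[ℝ] ℝ) (W : Set g) : Prop :=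
  ∀ x ∈ W, (∀ y ∈ W, B x y = 0) → x = 0

/-- The real symmetric bilinear form `B`, restricted to the real subspace `W`, has
signature `(p, q)`. -/
def SignatureOn (B : g →ₗ[ℝ] g →ₗ[ℝ] ℝ) (W : Submodule ℝ g) (p q : ℕ) : Prop :=
  ∃ P N : Submodule ℝ g, P ≤ W ∧ N ≤ W ∧ P ⊓ N = ⊥ ∧ P ⊔ N = W ∧
    finrank ℝ P = p ∧ finrank ℝ N = q ∧
    (∀ x ∈ P, x ≠ 0 → 0 < B x x) ∧ (∀ x ∈ N, x ≠ 0 → B x x < 0) ∧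
    (∀ x ∈ P, ∀ y ∈ N, B x y = 0)

/-- A real Manin form on `g`: symmetric, invariant, of signature
`(dim_ℂ g, dim_ℂ g)`. -/
def RealManinForm (B : g →ₗ[ℝ] g →ₗ[ℝ] ℝ) : Prop :=
  RSymm g B ∧ RInvariant g B ∧ SignatureOn g B ⊤ (finrank ℂ g) (finrank ℂ g)

/-- A complex Manin form on `g`: symmetric, invariant, nondegenerate. -/
def ComplexManinForm (B : g →ₗ[ℂ] g →ₗ[ℂ] ℂ) : Prop :=
  CSymm g B ∧ CInvariant g B ∧ CNondegOn g B Set.univ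

def RIsotropic (B : g →ₗ[ℝ] g →ₗ[ℝ] ℝ) (s : Set g) : Prop :=
  ∀ x ∈ s, ∀ y ∈ s, B x y = 0

def CIsotropic (B : g →ₗ[ℂ] g →ₗ[ℂ] ℂ) (s : Set g) : Prop :=
  ∀ x ∈ s, ∀ y ∈ s, B x y = 0

/-! ### Helper lemmas -/

theorem aux_nilp_of_quot {V Q : Type*} [AddCommGroup V] [Module ℂ V] [AddCommGroup Q] [Module ℂ Q]
    (W : Submodule ℂ V) (p : V →ₗ[ℂ] Q) (hker : ∀ v, p v = 0 → v ∈ W)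
    (T : End ℂ V) (S : End ℂ Q) (hTS : ∀ v, p (T v) = S (p v)) (hW : ∀ w ∈ W, T w = 0)
    (hS : IsNilpotent S) : IsNilpotent T := by
  obtain ⟨k, hk⟩ := hS
  have hpow : ∀ n v, p ((T ^ n) v) = (S ^ n) (p v) := by
    intro n
    induction n with
    | zero => intro v; simp
    | succ n ih => intro v; rw [pow_succ, pow_succ, End.mul_apply, End.mul_apply, ih, hTS]
  refine ⟨k + 1, ?_⟩
  ext v
  rw [pow_succ', End.mul_apply]
  apply hW
  apply hker
  rw [hpow, hk]
  simp

theorem aux_quot_nilp {V Q : Type*} [AddCommGroup V] [Module ℂ V] [AddCommGroup Q] [Module ℂ Q]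
    (p : V →ₗ[ℂ] Q) (hp : Function.Surjective p)
    (T : End ℂ V) (S : End ℂ Q) (hTS : ∀ v, p (T v) = S (p v))
    (hT : IsNilpotent T) : IsNilpotent S := by
  obtain ⟨k, hk⟩ := hT
  have hpow : ∀ n v, p ((T ^ n) v) = (S ^ n) (p v) := by
    intro n
    induction n with
    | zero => intro v; simp
    | succ n ih => intro v; rw [pow_succ, pow_succ, End.mul_apply, End.mul_apply, ih, hTS]
  refine ⟨k, ?_⟩
  ext q
  obtain ⟨v, rfl⟩ := hp q
  rw [← hpow, hk]
  simp

theorem aux_key {L : Type*} [LieRing L] [LieAlgebra ℂ L] (A : LieIdeal ℂ L)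
    [LieAlgebra.IsSolvable A] (n : ℕ) :
    ∀ (V : Type*) [AddCommGroup V] [Module ℂ V] [LieRingModule L V] [LieModule ℂ L V]
      [FiniteDimensional ℂ V], finrank ℂ V = n →
      (∀ z : L, ∀ a ∈ A, IsNilpotent (LieModule.toEnd ℂ L V ⁅z, a⁆)) ∧
      (∀ a ∈ A, ∀ b ∈ A, IsNilpotent (LieModule.toEnd ℂ L V a) →
        IsNilpotent (LieModule.toEnd ℂ L V b) →
        IsNilpotent (LieModule.toEnd ℂ L V (a + b))) := by
  induction n using Nat.strong_induction_on with
  | _ n ih =>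
  intro V _ _ _ _ _ hn
  rcases subsingleton_or_nontrivial V with hV | hV
  · exact ⟨fun z a _ => ⟨1, Subsingleton.elim _ _⟩,
      fun a _ b _ _ _ => ⟨1, Subsingleton.elim _ _⟩⟩
  obtain ⟨χ, hχ⟩ := LieModule.exists_nontrivial_weightSpace_of_isSolvable ℂ A V
  let W : LieSubmodule ℂ L V := LieModule.weightSpaceOfIsLieTower ℂ V (χ : A → ℂ)
  have hWmem : ∀ w, w ∈ W → ∀ a (ha : a ∈ A), ⁅a, w⁆ = χ ⟨a, ha⟩ • w := by
    intro w hw a ha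
    have h1 : w ∈ LieModule.weightSpace V (χ : A → ℂ) := hw
    rw [LieModule.mem_weightSpace] at h1
    exact h1 ⟨a, ha⟩
  obtain ⟨⟨w₀, hw₀⟩, hw₀'⟩ := exists_ne (0 : LieModule.weightSpace V (χ : A → ℂ))
  have hw₀W : w₀ ∈ W := hw₀
  have hw₀ne : w₀ ≠ 0 := fun h => hw₀' (Subtype.ext h)
  let p : V →ₗ[ℂ] (V ⧸ W) := (LieSubmodule.Quotient.mk' W : V →ₗ[ℂ] (V ⧸ W))
  have hps : Function.Surjective p := LieSubmodule.Quotient.surjective_mk' W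
  have hpk : ∀ v, p v = 0 → v ∈ W.toSubmodule := fun v hv =>
    (LieSubmodule.Quotient.mk_eq_zero (N := W)).1 hv
  have hpT : ∀ (x : L) (v : V), p (LieModule.toEnd ℂ L V x v) =
      LieModule.toEnd ℂ L (V ⧸ W) x (p v) := fun x v => rfl
  have hlt : finrank ℂ (V ⧸ W) < n := by
    have h1 := Submodule.finrank_quotient_add_finrank W.toSubmodule
    have h2 : 0 < finrank ℂ W.toSubmodule := by
      have : Nontrivial W.toSubmodule := ⟨⟨w₀, hw₀W⟩, 0, fun h => hw₀ne (congrArg Subtype.val h)⟩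
      exact finrank_pos
    have h3 : finrank ℂ (V ⧸ W) = finrank ℂ (V ⧸ W.toSubmodule) := rfl
    omega
  have hfd : FiniteDimensional ℂ (V ⧸ W) := Module.Finite.of_surjective p hps
  obtain ⟨ih1, ih2⟩ := ih _ hlt (V ⧸ W) rfl
  have hzero : ∀ a (ha : a ∈ A), IsNilpotent (LieModule.toEnd ℂ L V a) → χ ⟨a, ha⟩ = 0 := by
    rintro a ha ⟨k, hk⟩
    have hp : ∀ m : ℕ, (LieModule.toEnd ℂ L V a ^ m) w₀ = (χ ⟨a, ha⟩) ^ m • w₀ := by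
      intro m
      induction m with
      | zero => simp
      | succ m ihm =>
        rw [pow_succ', End.mul_apply, ihm, map_smul, LieModule.toEnd_apply_apply,
          hWmem w₀ hw₀W a ha, smul_smul, pow_succ]
    have h := hp k
    rw [hk, LinearMap.zero_apply] at h
    rcases smul_eq_zero.1 h.symm with h | h
    · exact (IsNilpotent.eq_zero ⟨k, h⟩)
    · exact absurd h hw₀ne
  refine ⟨fun z a ha => ?_, fun a ha b hb hna hnb => ?_⟩
  · refine aux_nilp_of_quot W.toSubmodule p hpk _ _ (hpT _) ?_ (ih1 z a ha)
    intro w hw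
    have hzw : ⁅z, w⁆ ∈ W := W.lie_mem hw
    rw [LieModule.toEnd_apply_apply, lie_lie, hWmem w hw a ha, hWmem _ hzw a ha, lie_smul, sub_self]
  · refine aux_nilp_of_quot W.toSubmodule p hpk _ _ (hpT _) ?_
      (ih2 a ha b hb (aux_quot_nilp p hps _ _ (hpT a) hna) (aux_quot_nilp p hps _ _ (hpT b) hnb))
    intro w hw
    rw [LieModule.toEnd_apply_apply, add_lie, hWmem w hw a ha, hWmem w hw b hb,
      hzero a ha hna, hzero b hb hnb, zero_smul, add_zero]

/-- Generic bracket span. -/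
def auxBs (K : Type*) [Field K] (h : Type*) [LieRing h] [LieAlgebra K h]
    (V W : Submodule K h) : Submodule K h :=
  Submodule.span K {z : h | ∃ x ∈ V, ∃ y ∈ W, ⁅x, y⁆ = z}

/-- Generic derived series. -/
def auxDs (K : Type*) [Field K] (h : Type*) [LieRing h] [LieAlgebra K h]
    (V : Submodule K h) : ℕ → Submodule K h
  | 0 => V
  | k + 1 => auxBs K h (auxDs K h V k) (auxDs K h V k)

section generic

variable {K : Type*} [Field K] {h : Type*} [LieRing h] [LieAlgebra K h]

theorem auxBs_le {V W U : Submodule K h} :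
    auxBs K h V W ≤ U ↔ ∀ x ∈ V, ∀ y ∈ W, ⁅x, y⁆ ∈ U := by
  unfold auxBs
  rw [Submodule.span_le]
  constructor
  · intro H x hx y hy
    exact H ⟨x, hx, y, hy, rfl⟩
  · rintro H _ ⟨x, hx, y, hy, rfl⟩
    exact H x hx y hy

theorem mem_auxBs {V W : Submodule K h} {x y : h} (hx : x ∈ V) (hy : y ∈ W) :
    ⁅x, y⁆ ∈ auxBs K h V W := Submodule.subset_span ⟨x, hx, y, hy, rfl⟩

theorem auxBs_mono {V W V' W' : Submodule K h} (h1 : V ≤ V') (h2 : W ≤ W') :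
    auxBs K h V W ≤ auxBs K h V' W' :=
  auxBs_le.2 fun _ hx _ hy => mem_auxBs (h1 hx) (h2 hy)

theorem auxDs_mono {V W : Submodule K h} (h1 : V ≤ W) (k : ℕ) :
    auxDs K h V k ≤ auxDs K h W k := by
  induction k with
  | zero => exact h1
  | succ k ih => exact auxBs_mono ih ih

theorem auxDs_add (V : Submodule K h) (k m : ℕ) :
    auxDs K h V (k + m) = auxDs K h (auxDs K h V k) m := by
  induction m with
  | zero => rfl
  | succ m ih =>
    change auxBs K h (auxDs K h V (k + m)) (auxDs K h V (k + m)) = _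
    rw [ih]; rfl

/-- Solvable ideals of `V`, as subspaces. -/
def auxSI (V J : Submodule K h) : Prop :=
  (J ≤ V ∧ ∀ x ∈ V, ∀ y ∈ J, ⁅x, y⁆ ∈ J) ∧ ∃ k, auxDs K h J k = ⊥

theorem auxSI_sup {V I J : Submodule K h} (hI : auxSI V I) (hJ : auxSI V J) :
    auxSI V (I ⊔ J) := by
  obtain ⟨⟨hI1, hI2⟩, k, hk⟩ := hI
  obtain ⟨⟨hJ1, hJ2⟩, m, hm⟩ := hJ
  refine ⟨⟨sup_le hI1 hJ1, ?_⟩, k + m, ?_⟩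
  · intro x hx y hy
    obtain ⟨a, ha, b, hb, rfl⟩ := Submodule.mem_sup.1 hy
    rw [lie_add]
    exact Submodule.add_mem_sup (hI2 x hx a ha) (hJ2 x hx b hb)
  · have hle : ∀ n, auxDs K h I n ≤ I := by
      intro n
      induction n with
      | zero => exact le_rfl
      | succ n ih => exact auxBs_le.2 fun x hx y hy => hI2 x (hI1 (ih hx)) y (ih hy)
    have key : ∀ n, auxDs K h (I ⊔ J) n ≤ auxDs K h I n ⊔ J := by
      intro n
      induction n with
      | zero => exact le_rfl
      | succ n ih =>
        refine auxBs_le.2 fun x hx y hy => ?_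
        obtain ⟨a, ha, b, hb, rfl⟩ := Submodule.mem_sup.1 (ih hx)
        obtain ⟨c, hc, d, hd, rfl⟩ := Submodule.mem_sup.1 (ih hy)
        rw [lie_add, add_lie, add_assoc]
        refine Submodule.add_mem_sup (mem_auxBs ha hc) (J.add_mem ?_ ?_)
        · rw [← lie_skew]
          exact J.neg_mem (hJ2 c (hI1 (hle n hc)) b hb)
        · exact hJ2 _ (V.add_mem (hI1 (hle n ha)) (hJ1 hb)) d hd
    have h1 := key k
    rw [hk, bot_sup_eq] at h1
    rw [auxDs_add, eq_bot_iff, ← hm]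
    exact auxDs_mono h1 m

theorem auxSI_sSup [FiniteDimensional K h] (V : Submodule K h) :
    auxSI V (sSup {J : Submodule K h | auxSI V J}) := by
  have hbot : auxSI V (⊥ : Submodule K h) := by
    refine ⟨⟨bot_le, ?_⟩, 0, rfl⟩
    intro x _ y hy
    rw [(Submodule.mem_bot K).1 hy, lie_zero]
    exact Submodule.zero_mem _
  obtain ⟨M, hM, hmax⟩ := (wellFounded_gt (α := Submodule K h)).has_min
    {J : Submodule K h | auxSI V J} ⟨⊥, hbot⟩
  have : sSup {J : Submodule K h | auxSI V J} = M := by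
    refine le_antisymm (sSup_le fun J hJ => ?_) (le_sSup hM)
    have h1 := hmax (M ⊔ J) (auxSI_sup hM hJ)
    by_contra hn
    exact h1 (lt_of_le_of_ne le_sup_left fun he => hn (he ▸ le_sup_right))
  rw [this]
  exact hM

end generic

/-- The main statement on the complex level. -/
theorem aux_complex (h : Type*) [LieRing h] [LieAlgebra ℂ h] [FiniteDimensional ℂ h]
    (V J : Submodule ℂ h) (hV : ∀ x ∈ V, ∀ y ∈ V, ⁅x, y⁆ ∈ V) (hJ : auxSI V J) :
    (∀ z ∈ V, ∀ a ∈ J, IsNilpotent (LieAlgebra.ad ℂ h ⁅z, a⁆)) ∧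
      (∀ a ∈ J, ∀ b ∈ J, IsNilpotent (LieAlgebra.ad ℂ h a) →
        IsNilpotent (LieAlgebra.ad ℂ h b) → IsNilpotent (LieAlgebra.ad ℂ h (a + b))) := by
  obtain ⟨⟨hJV, hJ2⟩, k, hk⟩ := hJ
  let L : LieSubalgebra ℂ h := { V with lie_mem' := fun {x y} hx hy => hV x hx y hy }
  let A : LieIdeal ℂ L :=
    { J.comap L.toSubmodule.subtype with
      lie_mem := fun {x m} hm => hJ2 x.1 x.2 m.1 hm }
  have hser : ∀ n, ∀ x : A, x ∈ LieAlgebra.derivedSeries ℂ A n → (x : L).1 ∈ auxDs ℂ h J n := by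
    intro n
    induction n with
    | zero => intro x _; exact x.2
    | succ n ih =>
      intro x hx
      rw [LieAlgebra.derivedSeries_def, LieAlgebra.derivedSeriesOfIdeal_succ,
        ← LieSubmodule.mem_toSubmodule, LieSubmodule.lieIdeal_oper_eq_linear_span'] at hx
      induction hx using Submodule.span_induction with
      | mem x hx =>
        obtain ⟨a, ha, b, hb, rfl⟩ := hx
        exact mem_auxBs (ih a ha) (ih b hb)
      | zero => exact Submodule.zero_mem _
      | add x y _ _ h1 h2 => exact Submodule.add_mem _ h1 h2
      | smul c x _ h1 => exact Submodule.smul_mem _ c h1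
  have hsolv : LieAlgebra.IsSolvable A := by
    refine LieAlgebra.IsSolvable.mk (R := ℂ) (k := k) ?_
    rw [eq_bot_iff]
    intro x hx
    have h1 := hser k x hx
    rw [hk, Submodule.mem_bot] at h1
    rw [LieSubmodule.mem_bot]
    exact Subtype.ext (Subtype.ext h1)
  obtain ⟨k1, k2⟩ := aux_key A (finrank ℂ h) h rfl
  exact ⟨fun z hz a ha => k1 ⟨z, hz⟩ ⟨a, hJV ha⟩ ha,
    fun a ha b hb h1 h2 => k2 ⟨a, hJV ha⟩ ha ⟨b, hJV hb⟩ hb h1 h2⟩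

section realcase

variable {h : Type*} [LieRing h] [LieAlgebra ℝ h] [LieAlgebra ℂ h]

theorem aux_span_lie {S T U : Submodule ℝ h} (H : ∀ x ∈ S, ∀ y ∈ T, ⁅x, y⁆ ∈ U) :
    ∀ x ∈ Submodule.span ℂ (S : Set h), ∀ y ∈ Submodule.span ℂ (T : Set h),
      ⁅x, y⁆ ∈ Submodule.span ℂ (U : Set h) := by
  intro x hx y hy
  induction hx using Submodule.span_induction with
  | mem x hx =>
    induction hy using Submodule.span_induction with
    | mem y hy => exact Submodule.subset_span (H x hx y hy)
    | zero => rw [lie_zero]; exact Submodule.zero_mem _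
    | add a b _ _ h1 h2 => rw [lie_add]; exact Submodule.add_mem _ h1 h2
    | smul c a _ h1 => rw [lie_smul]; exact Submodule.smul_mem _ c h1
  | zero => rw [zero_lie]; exact Submodule.zero_mem _
  | add a b _ _ h1 h2 => rw [add_lie]; exact Submodule.add_mem _ h1 h2
  | smul c a _ h1 => rw [smul_lie]; exact Submodule.smul_mem _ c h1

theorem auxSI_span {V J : Submodule ℝ h} (hJ : auxSI V J) :
    auxSI (Submodule.span ℂ (V : Set h)) (Submodule.span ℂ (J : Set h)) := by
  obtain ⟨⟨hJV, hJ2⟩, k, hk⟩ := hJ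
  refine ⟨⟨Submodule.span_mono hJV, aux_span_lie hJ2⟩, k, ?_⟩
  have key : ∀ n, auxDs ℂ h (Submodule.span ℂ (J : Set h)) n ≤
      Submodule.span ℂ (auxDs ℝ h J n : Set h) := by
    intro n
    induction n with
    | zero => exact le_rfl
    | succ n ih =>
      exact auxBs_le.2 fun x hx y hy =>
        aux_span_lie (fun a ha b hb => mem_auxBs ha hb) x (ih hx) y (ih hy)
  have h1 := key k
  rw [hk] at h1
  rw [eq_bot_iff]
  refine h1.trans ?_
  rw [Submodule.span_le]
  intro x hx
  exact hx

end realcase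

theorem auxDs_eq_derivedSub (h : Type*) [LieRing h] [LieAlgebra ℂ h]
    (V : Submodule ℂ h) (k : ℕ) : derivedSub h V k = auxDs ℂ h V k := by
  induction k with
  | zero => rfl
  | succ k ih =>
    change bracketSpan h (derivedSub h V k) (derivedSub h V k) = _
    rw [ih]; rfl

theorem auxDs_eq_derivedSubR (h : Type*) [LieRing h] [LieAlgebra ℝ h]
    (V : Submodule ℝ h) (k : ℕ) : derivedSubR h V k = auxDs ℝ h V k := by
  induction k with
  | zero => rfl
  | succ k ih =>
    change bracketSpanR h (derivedSubR h V k) (derivedSubR h V k) = _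
    rw [ih]; rfl

theorem aux_radicalIn (h : Type*) [LieRing h] [LieAlgebra ℂ h] [FiniteDimensional ℂ h]
    (V : Submodule ℂ h) : auxSI V (radicalIn h V) := by
  have h1 := auxSI_sSup V
  have h2 : radicalIn h V = sSup {J : Submodule ℂ h | auxSI V J} := by
    unfold radicalIn SolvableSub IsIdealIn auxSI
    simp only [auxDs_eq_derivedSub]
  rw [h2]; exact h1

theorem aux_radicalInR (h : Type*) [LieRing h] [LieAlgebra ℝ h] [FiniteDimensional ℝ h]
    (V : Submodule ℝ h) : auxSI V (radicalInR h V) := by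
  have h1 := auxSI_sSup V
  have h2 : radicalInR h V = sSup {J : Submodule ℝ h | auxSI V J} := by
    unfold radicalInR SolvableSubR IsIdealInR auxSI
    simp only [auxDs_eq_derivedSubR]
  rw [h2]; exact h1

theorem aux_lie_mem_der (h : Type*) [LieRing h] [LieAlgebra ℂ h] (X Y : h) :
    ⁅X, Y⁆ ∈ derivedOf h ⊤ :=
  Submodule.subset_span ⟨X, Submodule.mem_top, Y, Submodule.mem_top, rfl⟩

theorem aux_nilp_smul (h : Type*) [LieRing h] [LieAlgebra ℂ h] (c : ℂ) (X : h)
    (hX : IsNilpotent (LieAlgebra.ad ℂ h X)) : IsNilpotent (LieAlgebra.ad ℂ h (c • X)) := by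
  rw [map_smul]
  exact hX.smul c

/-- Lemma 8 of Delorme.
Let `g` be complex reductive, `B` a real (resp. complex) Manin form and `i` a real
(resp. complex) Lagrangian Lie subalgebra for `B`.  With `r` the radical of `i` and
`n = {X ∈ r ∩ g^der | ad X nilpotent}`, the set `n` is an ideal of `i` and `[i, r] ⊆ n`. -/
theorem nilpotent_part_of_radical_is_ideal
    (g : Type*) [LieRing g] [LieAlgebra ℝ g] [LieAlgebra ℂ g] [IsScalarTower ℝ ℂ g]
    [FiniteDimensional ℂ g] [FiniteDimensional ℝ g]
    (hred : IsReductive g) :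
    -- real case
    (∀ B : g →ₗ[ℝ] g →ₗ[ℝ] ℝ, RealManinForm g B →
      ∀ i : Submodule ℝ g, IsSubR g i → RIsotropic g B i →
        finrank ℝ i = finrank ℂ g →
        (∀ X, (X ∈ radicalInR g i ∧ X ∈ derivedOf g ⊤ ∧
            IsNilpotent (LieAlgebra.ad ℂ g X)) → X ∈ i) ∧
        (∀ X Y, (X ∈ radicalInR g i ∧ X ∈ derivedOf g ⊤ ∧
            IsNilpotent (LieAlgebra.ad ℂ g X)) →
          (Y ∈ radicalInR g i ∧ Y ∈ derivedOf g ⊤ ∧ IsNilpotent (LieAlgebra.ad ℂ g Y)) →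
          (X + Y ∈ radicalInR g i ∧ X + Y ∈ derivedOf g ⊤ ∧
            IsNilpotent (LieAlgebra.ad ℂ g (X + Y)))) ∧
        (∀ (c : ℝ) (X), (X ∈ radicalInR g i ∧ X ∈ derivedOf g ⊤ ∧
            IsNilpotent (LieAlgebra.ad ℂ g X)) →
          (c • X ∈ radicalInR g i ∧ c • X ∈ derivedOf g ⊤ ∧
            IsNilpotent (LieAlgebra.ad ℂ g (c • X)))) ∧
        (∀ X ∈ i, ∀ Y, (Y ∈ radicalInR g i ∧ Y ∈ derivedOf g ⊤ ∧
            IsNilpotent (LieAlgebra.ad ℂ g Y)) →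
          (⁅X, Y⁆ ∈ radicalInR g i ∧ ⁅X, Y⁆ ∈ derivedOf g ⊤ ∧
            IsNilpotent (LieAlgebra.ad ℂ g ⁅X, Y⁆))) ∧
        (∀ X ∈ i, ∀ Y ∈ radicalInR g i,
          (⁅X, Y⁆ ∈ radicalInR g i ∧ ⁅X, Y⁆ ∈ derivedOf g ⊤ ∧
            IsNilpotent (LieAlgebra.ad ℂ g ⁅X, Y⁆)))) ∧
    -- complex case
    (∀ B : g →ₗ[ℂ] g →ₗ[ℂ] ℂ, ComplexManinForm g B →
      ∀ i : Submodule ℂ g, IsSub g i → CIsotropic g B i →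
        finrank ℝ (i.restrictScalars ℝ) = finrank ℂ g →
        (∀ X, (X ∈ radicalIn g i ∧ X ∈ derivedOf g ⊤ ∧
            IsNilpotent (LieAlgebra.ad ℂ g X)) → X ∈ i) ∧
        (∀ X Y, (X ∈ radicalIn g i ∧ X ∈ derivedOf g ⊤ ∧
            IsNilpotent (LieAlgebra.ad ℂ g X)) →
          (Y ∈ radicalIn g i ∧ Y ∈ derivedOf g ⊤ ∧ IsNilpotent (LieAlgebra.ad ℂ g Y)) →
          (X + Y ∈ radicalIn g i ∧ X + Y ∈ derivedOf g ⊤ ∧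
            IsNilpotent (LieAlgebra.ad ℂ g (X + Y)))) ∧
        (∀ (c : ℂ) (X), (X ∈ radicalIn g i ∧ X ∈ derivedOf g ⊤ ∧
            IsNilpotent (LieAlgebra.ad ℂ g X)) →
          (c • X ∈ radicalIn g i ∧ c • X ∈ derivedOf g ⊤ ∧
            IsNilpotent (LieAlgebra.ad ℂ g (c • X)))) ∧
        (∀ X ∈ i, ∀ Y, (Y ∈ radicalIn g i ∧ Y ∈ derivedOf g ⊤ ∧
            IsNilpotent (LieAlgebra.ad ℂ g Y)) →
          (⁅X, Y⁆ ∈ radicalIn g i ∧ ⁅X, Y⁆ ∈ derivedOf g ⊤ ∧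
            IsNilpotent (LieAlgebra.ad ℂ g ⁅X, Y⁆))) ∧
        (∀ X ∈ i, ∀ Y ∈ radicalIn g i,
          (⁅X, Y⁆ ∈ radicalIn g i ∧ ⁅X, Y⁆ ∈ derivedOf g ⊤ ∧
            IsNilpotent (LieAlgebra.ad ℂ g ⁅X, Y⁆)))) := by
  constructor
  · intro B _ i hi _ _
    have hr := aux_radicalInR g i
    obtain ⟨k1, k2⟩ := aux_complex g _ _ (aux_span_lie hi) (auxSI_span hr)
    have hc : ∀ (c : ℝ) (X : g), c • X = (c : ℂ) • X := fun c X => by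
      rw [← IsScalarTower.algebraMap_smul ℂ c X]; rfl
    have hlast : ∀ X ∈ i, ∀ Y ∈ radicalInR g i,
          (⁅X, Y⁆ ∈ radicalInR g i ∧ ⁅X, Y⁆ ∈ derivedOf g ⊤ ∧
            IsNilpotent (LieAlgebra.ad ℂ g ⁅X, Y⁆)) := fun X hX Y hY =>
      ⟨hr.1.2 X hX Y hY, aux_lie_mem_der g X Y,
        k1 X (Submodule.subset_span hX) Y (Submodule.subset_span hY)⟩
    refine ⟨fun X hX => hr.1.1 hX.1, ?_, ?_, fun X hX Y hY => hlast X hX Y hY.1, hlast⟩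
    · rintro X Y ⟨hX1, hX2, hX3⟩ ⟨hY1, hY2, hY3⟩
      exact ⟨Submodule.add_mem _ hX1 hY1, Submodule.add_mem _ hX2 hY2,
        k2 X (Submodule.subset_span hX1) Y (Submodule.subset_span hY1) hX3 hY3⟩
    · rintro c X ⟨hX1, hX2, hX3⟩
      refine ⟨Submodule.smul_mem _ c hX1, ?_, ?_⟩
      · rw [hc]; exact Submodule.smul_mem _ _ hX2
      · rw [hc]; exact aux_nilp_smul g _ X hX3
  · intro B _ i hi _ _
    have hr := aux_radicalIn g i
    obtain ⟨k1, k2⟩ := aux_complex g _ _ hi hr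
    have hlast : ∀ X ∈ i, ∀ Y ∈ radicalIn g i,
          (⁅X, Y⁆ ∈ radicalIn g i ∧ ⁅X, Y⁆ ∈ derivedOf g ⊤ ∧
            IsNilpotent (LieAlgebra.ad ℂ g ⁅X, Y⁆)) := fun X hX Y hY =>
      ⟨hr.1.2 X hX Y hY, aux_lie_mem_der g X Y, k1 X hX Y hY⟩
    refine ⟨fun X hX => hr.1.1 hX.1, ?_, ?_, fun X hX Y hY => hlast X hX Y hY.1, hlast⟩
    · rintro X Y ⟨hX1, hX2, hX3⟩ ⟨hY1, hY2, hY3⟩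
      exact ⟨Submodule.add_mem _ hX1 hY1, Submodule.add_mem _ hX2 hY2,
        k2 X hX1 Y hY1 hX3 hY3⟩
    · rintro c X ⟨hX1, hX2, hX3⟩
      exact ⟨Submodule.smul_mem _ c hX1, Submodule.smul_mem _ c hX2, aux_nilp_smul g c X hX3⟩

end ManinPaper
end
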